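/- arXiv:math/0606060 — 2 statements merged into one kernel-verified Lean document; each statement's English description precedes it below -/
import Mathlib

section
/- Let M be a finite von Neumann algebra with faithful normal trace τ, let N ⊆ M be an abelian von Neumann subalgebra, let P_N : M → N be the trace-preserving conditional expectation, and let (b₁,…,b_n) be a commuting family of self-adjoint elements of M. Then τ(f(P_N(b₁),…,P_N(b_n))) ≤ τ(f(b₁,…,b_n)) for every continuous convex function f : ℝⁿ → ℝ. -/
open MeasureTheory
open scoped ComplexOrder

/-!
Composing `P` with a character `χ` of the closure of the abelian algebra `N` gives a state `χ ∘ P`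
on the commutative C⋆-algebra generated by the `bᵢ`. A continuous convex function is the supremum of
its affine minorants, and a state commutes with affine functions, so Jensen's inequality holds for
`χ ∘ P`: if `f ≤ q` on the joint spectrum of `b`, with `q` a polynomial, then
`f (χ (P b₁), …, χ (P b_n)) ≤ χ (P (q b))`. If moreover `p ≤ f` on the joint spectrum of `P b`,
letting `χ` vary gives `p (P b) ≤ P (q b)` in the closure of `N`. Applying `τ = τ ∘ P` yields
`∫ p dμa ≤ ∫ q dμb`, and by Stone–Weierstrass `p` and `q` may be taken with integrals
arbitrarily close to those of `f`.
-/

section ConvexOn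

variable {E : Type*} [NormedAddCommGroup E] [InnerProductSpace ℝ E] [CompleteSpace E]

theorem exists_inner_add_le_of_convexOn {f : E → ℝ} (hf : Continuous f)
    (hfc : ConvexOn ℝ Set.univ f) {x₀ : E} {t : ℝ} (ht : t < f x₀) :
    ∃ (w : E) (c : ℝ), (∀ x, inner ℝ w x + c ≤ f x) ∧ inner ℝ w x₀ + c = t := by
  obtain ⟨l, c, hlf, hlt⟩ := ConvexOn.exists_affine_le_of_lt (𝕜 := ℝ) (Set.mem_univ x₀) ht
    isClosed_univ (hf.lowerSemicontinuous.lowerSemicontinuousOn _) hfc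
  refine ⟨(InnerProductSpace.toDual ℝ E).symm l, c, fun x => ?_, ?_⟩
  · rw [InnerProductSpace.toDual_symm_apply]
    exact hlf ⟨x, trivial⟩
  · rw [InnerProductSpace.toDual_symm_apply]
    exact hlt

end ConvexOn

section Approximation

open MvPolynomial

variable {ι : Type*}

theorem continuous_eval_euclidean (p : MvPolynomial ι ℝ) :
    Continuous fun x : EuclideanSpace ℝ ι => eval x p :=
  (MvPolynomial.continuous_eval p).comp (by fun_prop)

theorem exists_mvPolynomial_near {K : Set (EuclideanSpace ℝ ι)} (hK : IsCompact K)
    {f : EuclideanSpace ℝ ι → ℝ} (hf : ContinuousOn f K) {ε : ℝ} (hε : 0 < ε) :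
    ∃ p : MvPolynomial ι ℝ, ∀ x ∈ K, |eval x p - f x| < ε := by
  have : CompactSpace K := isCompact_iff_compactSpace.1 hK
  let coord (i : ι) : C(K, ℝ) := ⟨fun x => x.1 i, by fun_prop⟩
  have hcoord (p : MvPolynomial ι ℝ) (x : K) : aeval coord p x = eval x.1 p :=
    comp_aeval_apply coord (ContinuousMap.evalAlgHom ℝ ℝ x) p
  have hsep : (aeval coord : MvPolynomial ι ℝ →ₐ[ℝ] C(K, ℝ)).range.SeparatesPoints := by
    intro x y hxy
    obtain ⟨i, hi⟩ : ∃ i, x.1 i ≠ y.1 i := by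
      by_contra! h
      exact hxy (Subtype.ext (PiLp.ext h))
    exact ⟨_, ⟨coord i, ⟨X i, aeval_X coord i⟩, rfl⟩, hi⟩
  obtain ⟨⟨_, p, rfl⟩, hp⟩ :=
    ContinuousMap.exists_mem_subalgebra_near_continuous_of_separatesPoints _ hsep
      (K.domRestrict f) hf.domRestrict ε hε
  refine ⟨p, fun x hx => ?_⟩
  rw [← hcoord p ⟨x, hx⟩]
  exact hp ⟨x, hx⟩

theorem exists_mvPolynomial_between {K : Set (EuclideanSpace ℝ ι)} (hK : IsCompact K)
    {f : EuclideanSpace ℝ ι → ℝ} (hf : ContinuousOn f K) {ε : ℝ} (hε : 0 < ε) :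
    ∃ p : MvPolynomial ι ℝ, ∀ x ∈ K, eval x p ≤ f x ∧ f x ≤ eval x p + ε := by
  obtain ⟨p, hp⟩ := exists_mvPolynomial_near hK hf (half_pos hε)
  refine ⟨p - C (ε / 2), fun x hx => ?_⟩
  have hpx := abs_lt.1 (hp x hx)
  simp only [map_sub, eval_C]
  constructor <;> linarith

theorem integrable_of_isCompact_of_measure_compl_eq_zero {X E : Type*} [TopologicalSpace X]
    [T2Space X] [MeasurableSpace X] [OpensMeasurableSpace X] [NormedAddCommGroup E]
    {μ : Measure X} [IsFiniteMeasure μ] {K : Set X} (hK : IsCompact K) (hμ : μ Kᶜ = 0)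
    {f : X → E} (hf : ContinuousOn f K) : Integrable f μ := by
  have h : IntegrableOn f K μ := hf.integrableOn_compact hK
  rwa [IntegrableOn, Measure.restrict_eq_self_of_ae_mem (mem_ae_iff.2 hμ)] at h

variable [Finite ι]

theorem exists_mvPolynomial_le_integral_le_add {μ : Measure (EuclideanSpace ℝ ι)}
    [IsFiniteMeasure μ] (hμ : ∃ L, IsCompact L ∧ μ Lᶜ = 0) {K : Set (EuclideanSpace ℝ ι)}
    (hK : IsCompact K) {f : EuclideanSpace ℝ ι → ℝ} (hf : Continuous f) {δ : ℝ} (hδ : 0 < δ) :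
    ∃ p : MvPolynomial ι ℝ, (∀ x ∈ K, eval x p ≤ f x) ∧
      ∫ x, f x ∂μ ≤ ∫ x, eval x p ∂μ + δ := by
  obtain ⟨L, hL, hμL⟩ := hμ
  let ε := δ / (μ.real Set.univ + 1)
  have hε : 0 < ε := by positivity
  obtain ⟨p, hp⟩ := exists_mvPolynomial_between (hK.union hL) hf.continuousOn hε
  have hint : Integrable (fun x : EuclideanSpace ℝ ι => eval x p) μ :=
    integrable_of_isCompact_of_measure_compl_eq_zero hL hμL
      (continuous_eval_euclidean p).continuousOn
  have hle : ∀ᵐ x ∂μ, f x ≤ eval x p + ε := by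
    filter_upwards [mem_ae_iff.2 hμL] with x hx using (hp x (.inr hx)).2
  have hmass : μ.real Set.univ * ε ≤ δ := by
    rw [mul_div_left_comm]
    exact mul_le_of_le_one_right hδ.le (div_le_one_of_le₀ (by linarith) (by positivity))
  refine ⟨p, fun x hx => (hp x (.inl hx)).1, ?_⟩
  calc ∫ x, f x ∂μ ≤ ∫ x, (eval x p + ε) ∂μ :=
        integral_mono_ae
          (integrable_of_isCompact_of_measure_compl_eq_zero hL hμL hf.continuousOn)
          (hint.add (integrable_const ε)) hle
    _ = ∫ x, eval x p ∂μ + μ.real Set.univ * ε := by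
        rw [integral_add hint (integrable_const ε), integral_const, smul_eq_mul]
    _ ≤ ∫ x, eval x p ∂μ + δ := by gcongr

theorem exists_mvPolynomial_ge_integral_le_add {μ : Measure (EuclideanSpace ℝ ι)}
    [IsFiniteMeasure μ] (hμ : ∃ L, IsCompact L ∧ μ Lᶜ = 0) {K : Set (EuclideanSpace ℝ ι)}
    (hK : IsCompact K) {f : EuclideanSpace ℝ ι → ℝ} (hf : Continuous f) {δ : ℝ} (hδ : 0 < δ) :
    ∃ q : MvPolynomial ι ℝ, (∀ x ∈ K, f x ≤ eval x q) ∧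
      ∫ x, eval x q ∂μ ≤ ∫ x, f x ∂μ + δ := by
  obtain ⟨p, hpf, hp⟩ := exists_mvPolynomial_le_integral_le_add hμ hK hf.neg hδ
  refine ⟨-p, fun x hx => ?_, ?_⟩
  · rw [map_neg]
    exact le_neg_of_le_neg (hpf x hx)
  · simp only [Pi.neg_apply, integral_neg] at hp
    simp only [map_neg, integral_neg]
    linarith

end Approximation

section JointSpectrum

open MvPolynomial WeakDual

variable {A ι : Type*}

theorem isSelfAdjoint_aeval {R : Type*} [CommSemiring R] [StarRing R] [TrivialStar R]
    [CommSemiring A] [StarRing A] [Algebra R A] [StarModule R A] {a : ι → A}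
    (ha : ∀ i, IsSelfAdjoint (a i)) (p : MvPolynomial ι R) : IsSelfAdjoint (aeval a p) := by
  induction p using MvPolynomial.induction_on with
  | C c =>
    rw [aeval_C]
    exact .algebraMap A (.all c)
  | add p q hp hq =>
    rw [map_add]
    exact hp.add hq
  | mul_X p i hp =>
    rw [map_mul, aeval_X]
    exact hp.mul (ha i)

/-- The family `a`, read through `ψ`, as a point of Euclidean space. Only real parts are recorded:
nothing is lost when `a` is self-adjoint and `ψ` is positive. -/
def reValues (ψ : A → ℂ) (a : ι → A) : EuclideanSpace ℝ ι :=
  WithLp.toLp 2 fun i => (ψ (a i)).re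

theorem re_map_aeval_affine [Fintype ι] [CommRing A] [Algebra ℂ A] {F : Type*} [FunLike F A ℂ]
    [LinearMapClass F ℂ A ℂ] (ψ : F) (hψ : ψ 1 = 1) (a : ι → A) (w : EuclideanSpace ℝ ι) (c : ℝ) :
    (ψ (aeval a (∑ i, w i • X i + C c))).re = inner ℝ w (reValues ψ a) + c := by
  have hsmul (r : ℝ) (x : A) : ψ (r • x) = r * ψ x := by
    rw [← Complex.coe_smul, map_smul, smul_eq_mul]
  simp [reValues, Algebra.algebraMap_eq_smul_one, hsmul, hψ, PiLp.inner_apply, mul_comm]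

variable [CommCStarAlgebra A]

theorem nonneg_iff_forall_character_nonneg [PartialOrder A] [StarOrderedRing A] {x : A} :
    0 ≤ x ↔ ∀ χ : characterSpace ℂ A, 0 ≤ χ x := by
  rw [← map_le_map_iff (gelfandStarTransform A), map_zero]
  rfl

/-- The joint spectrum of a self-adjoint family in a commutative C⋆-algebra, as the set of values
of the characters on it. -/
def jointSpectrum (a : ι → A) : Set (EuclideanSpace ℝ ι) :=
  Set.range fun χ : characterSpace ℂ A => reValues χ a

theorem isCompact_jointSpectrum (a : ι → A) : IsCompact (jointSpectrum a) := by
  refine isCompact_range ((PiLp.continuous_toLp 2 _).comp (continuous_pi fun i => ?_))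
  exact Complex.continuous_re.comp (gelfandTransform ℂ A (a i)).continuous

theorem character_aeval {a : ι → A} (ha : ∀ i, IsSelfAdjoint (a i))
    (χ : characterSpace ℂ A) (p : MvPolynomial ι ℝ) :
    χ (aeval a p) = (eval (reValues χ a) p : ℝ) := by
  have hreal : (fun i => χ (a i)) = algebraMap ℝ ℂ ∘ reValues χ a := by
    funext i
    exact (Complex.conj_eq_iff_re.1 ((ha i).map χ)).symm
  calc χ (aeval a p) = aeval (fun i => χ (a i)) p :=
        comp_aeval_apply a ((CharacterSpace.toAlgHom χ).restrictScalars ℝ) p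
    _ = (eval (reValues χ a) p : ℝ) := by
        rw [hreal, aeval_algebraMap_apply]
        rfl

theorem aeval_le_aeval [PartialOrder A] [StarOrderedRing A] {a : ι → A}
    (ha : ∀ i, IsSelfAdjoint (a i)) {p q : MvPolynomial ι ℝ}
    (hpq : ∀ x ∈ jointSpectrum a, eval x p ≤ eval x q) : aeval a p ≤ aeval a q := by
  rw [← sub_nonneg, nonneg_iff_forall_character_nonneg]
  intro χ
  rw [map_sub, sub_nonneg, character_aeval ha, character_aeval ha, Complex.real_le_real]
  exact hpq _ ⟨χ, rfl⟩

theorem le_re_map_aeval_of_convexOn [Finite ι] [PartialOrder A] [StarOrderedRing A] {a : ι → A}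
    (ha : ∀ i, IsSelfAdjoint (a i)) (ψ : A →ₚ[ℂ] ℂ) (hψ : ψ 1 = 1)
    {f : EuclideanSpace ℝ ι → ℝ} (hf : Continuous f) (hfc : ConvexOn ℝ Set.univ f)
    {q : MvPolynomial ι ℝ} (hq : ∀ x ∈ jointSpectrum a, f x ≤ eval x q) :
    f (reValues ψ a) ≤ (ψ (aeval a q)).re := by
  have := Fintype.ofFinite ι
  refine le_of_forall_lt_imp_le_of_dense fun t ht => ?_
  obtain ⟨w, c, hwf, hwt⟩ := exists_inner_add_le_of_convexOn hf hfc ht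
  have hle : aeval a (∑ i, w i • X i + C c) ≤ aeval a q :=
    aeval_le_aeval ha fun x hx => by
      simpa [smul_eval, PiLp.inner_apply, mul_comm] using (hwf x).trans (hq x hx)
  rw [← hwt, ← re_map_aeval_affine ψ hψ]
  exact (Complex.le_def.1 (OrderHomClass.mono ψ hle)).1

theorem aeval_map_le_map_aeval_of_convexOn [Finite ι] [PartialOrder A] [StarOrderedRing A]
    {B : Type*} [CommCStarAlgebra B] [PartialOrder B] [StarOrderedRing B]
    (P : B →ₚ[ℂ] A) (hP : P 1 = 1) {b : ι → B} (hb : ∀ i, IsSelfAdjoint (b i))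
    {f : EuclideanSpace ℝ ι → ℝ} (hf : Continuous f) (hfc : ConvexOn ℝ Set.univ f)
    {p q : MvPolynomial ι ℝ} (hp : ∀ x ∈ jointSpectrum (fun i => P (b i)), eval x p ≤ f x)
    (hq : ∀ x ∈ jointSpectrum b, f x ≤ eval x q) :
    aeval (fun i => P (b i)) p ≤ P (aeval b q) := by
  rw [← sub_nonneg, nonneg_iff_forall_character_nonneg]
  intro χ
  let ψ : B →ₚ[ℂ] ℂ := (PositiveLinearMap.ofClass χ).comp P
  have hψ : ψ 1 = 1 := (congrArg χ hP).trans (map_one χ)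
  have hψre : ((ψ (aeval b q)).re : ℂ) = ψ (aeval b q) :=
    Complex.conj_eq_iff_re.1 ((isSelfAdjoint_aeval hb q).map' ψ)
  rw [map_sub, sub_nonneg, character_aeval (fun i => (hb i).map' P)]
  change _ ≤ ψ (aeval b q)
  rw [← hψre, Complex.real_le_real]
  exact (hp _ ⟨χ, rfl⟩).trans (le_re_map_aeval_of_convexOn hb ψ hψ hf hfc hq)

end JointSpectrum

section JointDistribution

open MvPolynomial

variable {n : ℕ} {A B : Type*}

/-- `μ` is the joint distribution of the commuting family `a` in the state `φ`: it is compactly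
supported and `φ` takes the moments of `μ` on the monomials in `a`. Products are taken in the order
of `Fin n`, so that the notion makes sense in a noncommutative algebra. -/
structure IsJointDistribution [Ring A] [Module ℂ A] (φ : A →ₗ[ℂ] ℂ) (a : Fin n → A)
    (μ : Measure (EuclideanSpace ℝ (Fin n))) : Prop where
  exists_isCompact_measure_compl_eq_zero : ∃ K, IsCompact K ∧ μ Kᶜ = 0
  moment_eq : ∀ e : Fin n → ℕ,
    φ (List.ofFn fun i => a i ^ e i).prod = ((∫ x, ∏ i, x i ^ e i ∂μ : ℝ) : ℂ)

theorem IsJointDistribution.comp_algHom [Ring A] [Algebra ℂ A] [Ring B] [Algebra ℂ B]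
    {φ : B →ₗ[ℂ] ℂ} {j : A →ₐ[ℂ] B} {a : Fin n → A} {μ : Measure (EuclideanSpace ℝ (Fin n))}
    (h : IsJointDistribution φ (fun i => j (a i)) μ) :
    IsJointDistribution (φ ∘ₗ j.toLinearMap) a μ where
  exists_isCompact_measure_compl_eq_zero := h.exists_isCompact_measure_compl_eq_zero
  moment_eq e := by
    rw [← h.moment_eq, LinearMap.comp_apply, AlgHom.toLinearMap_apply, map_list_prod,
      List.map_ofFn]
    simp only [Function.comp_def, map_pow]

theorem IsJointDistribution.map_aeval [CommRing A] [Algebra ℂ A] {φ : A →ₗ[ℂ] ℂ} {a : Fin n → A}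
    {μ : Measure (EuclideanSpace ℝ (Fin n))} [IsFiniteMeasure μ]
    (h : IsJointDistribution φ a μ) (p : MvPolynomial (Fin n) ℝ) :
    φ (aeval a p) = ((∫ x, eval x p ∂μ : ℝ) : ℂ) := by
  obtain ⟨K, hK, hμ⟩ := h.exists_isCompact_measure_compl_eq_zero
  have hint (p : MvPolynomial (Fin n) ℝ) :
      Integrable (fun x : EuclideanSpace ℝ (Fin n) => eval x p) μ :=
    integrable_of_isCompact_of_measure_compl_eq_zero hK hμ
      (continuous_eval_euclidean p).continuousOn
  induction p using MvPolynomial.induction_on' with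
  | monomial e r =>
    have hφ (x : A) : φ (algebraMap ℝ A r * x) = r * φ x := by
      rw [← Algebra.smul_def, ← Complex.coe_smul, map_smul, smul_eq_mul]
    simp only [aeval_monomial, eval_monomial, Finsupp.prod_pow, hφ, ← List.prod_ofFn, h.moment_eq,
      integral_const_mul, Complex.ofReal_mul]
  | add p q hp hq =>
    simp only [map_add, hp, hq, integral_add (hint p) (hint q), Complex.ofReal_add]

variable [CommCStarAlgebra A] [PartialOrder A] [StarOrderedRing A]
  [CommCStarAlgebra B] [PartialOrder B] [StarOrderedRing B]

theorem integral_le_integral_of_isJointDistribution (φ : A →ₚ[ℂ] ℂ) (P : B →ₚ[ℂ] A) (hP : P 1 = 1)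
    {b : Fin n → B} (hb : ∀ i, IsSelfAdjoint (b i))
    {μ ν : Measure (EuclideanSpace ℝ (Fin n))} [IsFiniteMeasure μ] [IsFiniteMeasure ν]
    (hμ : IsJointDistribution φ.toLinearMap (fun i => P (b i)) μ)
    (hν : IsJointDistribution (φ.toLinearMap ∘ₗ P.toLinearMap) b ν)
    {f : EuclideanSpace ℝ (Fin n) → ℝ} (hf : Continuous f) (hfc : ConvexOn ℝ Set.univ f) :
    ∫ x, f x ∂μ ≤ ∫ x, f x ∂ν := by
  refine le_of_forall_pos_le_add fun δ hδ => ?_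
  obtain ⟨p, hpf, hp⟩ := exists_mvPolynomial_le_integral_le_add
    hμ.exists_isCompact_measure_compl_eq_zero (isCompact_jointSpectrum fun i => P (b i)) hf
    (half_pos hδ)
  obtain ⟨q, hfq, hq⟩ := exists_mvPolynomial_ge_integral_le_add
    hν.exists_isCompact_measure_compl_eq_zero (isCompact_jointSpectrum b) hf
    (half_pos hδ)
  have hpq : ∫ x, eval x p ∂μ ≤ ∫ x, eval x q ∂ν := by
    rw [← Complex.real_le_real, ← hμ.map_aeval, ← hν.map_aeval]
    exact OrderHomClass.mono φ (aeval_map_le_map_aeval_of_convexOn P hP hb hf hfc hpf hfq)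
  linarith

end JointDistribution

section Subalgebra

open scoped IsMulCommutative

instance isMulCommutative_topologicalClosure {R M : Type*} [CommRing R] [StarRing R]
    [TopologicalSpace M] [Ring M] [Algebra R M] [StarRing M] [StarModule R M]
    [IsSemitopologicalRing M] [ContinuousStar M] [T2Space M] (S : StarSubalgebra R M)
    [IsMulCommutative S] : IsMulCommutative S.topologicalClosure :=
  ⟨⟨(S.commRingTopologicalClosure mul_comm).mul_comm⟩⟩

/-- A closed commutative star subalgebra of a C⋆-algebra, as a commutative C⋆-algebra. -/
noncomputable abbrev commCStarAlgebraOfIsMulCommutative {M : Type*} [CStarAlgebra M]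
    (S : StarSubalgebra ℂ M) [IsClosed (S : Set M)] [IsMulCommutative S] : CommCStarAlgebra S where
  mul_comm := mul_comm

variable {M : Type*} [CStarAlgebra M] [PartialOrder M] [StarOrderedRing M]

theorem starOrderedRing_of_isClosed (S : StarSubalgebra ℂ M) [IsClosed (S : Set M)] :
    StarOrderedRing S := by
  refine .of_nonneg_iff' (fun h z => add_le_add_right (α := M) h z) fun x => ⟨fun hx => ?_, ?_⟩
  · have hx : 0 ≤ (x : M) := hx
    have hmem : CFC.sqrt (x : M) ∈ S := by
      rw [CFC.sqrt_eq_real_sqrt (x : M) hx, cfcₙ_eq_cfc]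
      exact cfc_mem (𝕜' := ℂ) _ x.2
    refine ⟨⟨_, hmem⟩, Subtype.ext ?_⟩
    change _ = star (CFC.sqrt (x : M)) * CFC.sqrt (x : M)
    rw [(CFC.sqrt_nonneg (x : M)).isSelfAdjoint.star_eq, CFC.sqrt_mul_sqrt_self (x : M) hx]
  · rintro ⟨s, rfl⟩
    exact star_mul_self_nonneg (s : M)

theorem integral_le_integral_of_isMulCommutative (A B : StarSubalgebra ℂ M)
    [IsClosed (A : Set M)] [IsMulCommutative A] [IsClosed (B : Set M)] [IsMulCommutative B]
    (τ : M →ₚ[ℂ] ℂ) (P : M →ₚ[ℂ] M) (hP : P 1 = 1) (hPA : ∀ x ∈ B, P x ∈ A)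
    (hτP : ∀ x ∈ B, τ (P x) = τ x) {n : ℕ} {b : Fin n → M} (hbB : ∀ i, b i ∈ B)
    (hb : ∀ i, IsSelfAdjoint (b i))
    {μ ν : Measure (EuclideanSpace ℝ (Fin n))} [IsFiniteMeasure μ] [IsFiniteMeasure ν]
    (hμ : IsJointDistribution τ.toLinearMap (fun i => P (b i)) μ)
    (hν : IsJointDistribution τ.toLinearMap b ν)
    {f : EuclideanSpace ℝ (Fin n) → ℝ} (hf : Continuous f) (hfc : ConvexOn ℝ Set.univ f) :
    ∫ x, f x ∂μ ≤ ∫ x, f x ∂ν := by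
  let _ := commCStarAlgebraOfIsMulCommutative A
  let _ := commCStarAlgebraOfIsMulCommutative B
  have : StarOrderedRing A := starOrderedRing_of_isClosed A
  have : StarOrderedRing B := starOrderedRing_of_isClosed B
  let φ : A →ₚ[ℂ] ℂ := .mk₀ (τ.toLinearMap ∘ₗ A.subtype.toLinearMap) fun _ hx => map_nonneg τ hx
  let Q : B →ₚ[ℂ] A :=
    .mk₀ ((P.toLinearMap ∘ₗ B.subtype.toLinearMap).codRestrict A.toSubalgebra.toSubmodule
      fun x => hPA x x.2) fun _ hx => map_nonneg P hx
  have hφQ : φ.toLinearMap ∘ₗ Q.toLinearMap = τ.toLinearMap ∘ₗ B.subtype.toLinearMap :=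
    LinearMap.ext fun x => hτP x x.2
  let c (i : Fin n) : B := ⟨b i, hbB i⟩
  have hc (i) : IsSelfAdjoint (c i) := Subtype.ext (hb i)
  have hμ' : IsJointDistribution φ.toLinearMap (fun i => Q (c i)) μ :=
    .comp_algHom (j := A.subtype.toAlgHom) hμ
  have hν' : IsJointDistribution (φ.toLinearMap ∘ₗ Q.toLinearMap) c ν := by
    rw [hφQ]
    exact .comp_algHom (j := B.subtype.toAlgHom) hν
  exact integral_le_integral_of_isJointDistribution φ Q (Subtype.ext hP) hc hμ' hν' hf hfc

end Subalgebra

theorem conditional_expectation_trace_jensen_general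
    {M : Type*} [CStarAlgebra M]
    (τ : M →ₗ[ℂ] ℂ) (hτpos : ∀ x : M, 0 ≤ τ (star x * x))
    (N : StarSubalgebra ℂ M) (hNab : ∀ x ∈ N, ∀ y ∈ N, x * y = y * x)
    (P : M →ₗ[ℂ] M) (hP1 : P 1 = 1)
    (hPpos : ∀ x : M, (∃ y, x = star y * y) → ∃ y, P x = star y * y)
    (hPtr : ∀ x : M, τ (P x) = τ x) (hPrange : ∀ x : M, P x ∈ N)
    (n : ℕ) (b : Fin n → M)
    (hbsa : ∀ i, b i = star (b i))
    (hbcomm : ∀ i j, b i * b j = b j * b i)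
    (μa μb : Measure (EuclideanSpace ℝ (Fin n)))
    [IsFiniteMeasure μa] [IsFiniteMeasure μb]
    (hμa : IsJointDistribution τ (fun i => P (b i)) μa) (hμb : IsJointDistribution τ b μb) :
    ∀ f : EuclideanSpace ℝ (Fin n) → ℝ, Continuous f → ConvexOn ℝ Set.univ f →
      ∫ x, f x ∂μa ≤ ∫ x, f x ∂μb := by
  intro f hf hfc
  let _ : PartialOrder M := CStarAlgebra.spectralOrder M
  have : StarOrderedRing M := CStarAlgebra.spectralOrderedRing M
  let τ' : M →ₚ[ℂ] ℂ := .mk₀ τ fun x hx => by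
    obtain ⟨y, rfl⟩ := CStarAlgebra.nonneg_iff_eq_star_mul_self.1 hx
    exact hτpos y
  let P' : M →ₚ[ℂ] M := .mk₀ P fun x hx =>
    CStarAlgebra.nonneg_iff_eq_star_mul_self.2
      (hPpos x (CStarAlgebra.nonneg_iff_eq_star_mul_self.1 hx))
  let S := StarAlgebra.adjoin ℂ (Set.range b)
  have : IsMulCommutative N := .of_setLike_mul_comm hNab
  have : IsMulCommutative S := StarAlgebra.isMulCommutative_adjoin ℂ
    (by rintro _ ⟨i, rfl⟩ _ ⟨j, rfl⟩; exact hbcomm i j)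
    (by rintro _ ⟨i, rfl⟩ _ ⟨j, rfl⟩; rw [← hbsa j]; exact hbcomm i j)
  have := N.isClosed_topologicalClosure
  have := S.isClosed_topologicalClosure
  exact integral_le_integral_of_isMulCommutative N.topologicalClosure S.topologicalClosure τ' P'
    hP1 (fun x _ => N.le_topologicalClosure (hPrange x)) (fun x _ => hPtr x)
    (fun i => S.le_topologicalClosure (StarAlgebra.subset_adjoin ℂ _ ⟨i, rfl⟩))
    (fun i => (hbsa i).symm) hμa hμb hf hfc

/-- Trace–Jensen inequality for the trace-preserving conditional expectation `P` onto
an abelian subalgebra `N` of a finite von Neumann algebra: for a commuting self-adjoint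
family `b₁,…,b_n`, one has `τ(f(P(b₁),…,P(b_n))) ≤ τ(f(b₁,…,b_n))` for every continuous
convex `f : ℝⁿ → ℝ`. Here the traces of the functional calculi are expressed through
the joint spectral distributions `μa` (of the `P(bᵢ)`) and `μb` (of the `bᵢ`),
characterized as the compactly supported probability measures whose moments match the
traces of the corresponding monomials. -/
theorem conditional_expectation_trace_jensen
    {M : Type*} [NormedRing M] [StarRing M] [CStarRing M] [NormedAlgebra ℂ M]
    [StarModule ℂ M] [CompleteSpace M]
    (τ : M →ₗ[ℂ] ℂ) (hτ1 : τ 1 = 1)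
    (htr : ∀ x y : M, τ (x * y) = τ (y * x))
    (hτpos : ∀ x : M, 0 ≤ τ (star x * x))
    (hτfaith : ∀ x : M, τ (star x * x) = 0 → x = 0)
    (N : StarSubalgebra ℂ M) (hNab : ∀ x ∈ N, ∀ y ∈ N, x * y = y * x)
    (P : M →ₗ[ℂ] M) (hP1 : P 1 = 1)
    (hPpos : ∀ x : M, (∃ y, x = star y * y) → ∃ y, P x = star y * y)
    (hPtr : ∀ x : M, τ (P x) = τ x)
    (hPrange : ∀ x : M, P x ∈ N) (hPid : ∀ x ∈ N, P x = x)
    (n : ℕ) (b : Fin n → M)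
    (hbsa : ∀ i, b i = star (b i))
    (hbcomm : ∀ i j, b i * b j = b j * b i)
    (μa μb : Measure (EuclideanSpace ℝ (Fin n)))
    [IsProbabilityMeasure μa] [IsProbabilityMeasure μb]
    (hμac : ∃ K, IsCompact K ∧ μa Kᶜ = 0) (hμbc : ∃ K, IsCompact K ∧ μb Kᶜ = 0)
    (hμa : ∀ e : Fin n → ℕ,
      τ ((List.ofFn fun i => P (b i) ^ e i).prod) =
        ((∫ x, ∏ i, (x i) ^ e i ∂μa : ℝ) : ℂ))
    (hμb : ∀ e : Fin n → ℕ,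
      τ ((List.ofFn fun i => b i ^ e i).prod) =
        ((∫ x, ∏ i, (x i) ^ e i ∂μb : ℝ) : ℂ)) :
    ∀ f : EuclideanSpace ℝ (Fin n) → ℝ, Continuous f → ConvexOn ℝ Set.univ f →
      ∫ x, f x ∂μa ≤ ∫ x, f x ∂μb := by
  let _ : CStarAlgebra M := { }
  exact conditional_expectation_trace_jensen_general τ hτpos N hNab P hP1 hPpos hPtr hPrange n b
    hbsa hbcomm μa μb ⟨hμac, hμa⟩ ⟨hμbc, hμb⟩
end

section
/- Let M be a II₁ factor and let (a₁,…,a_n), (b₁,…,b_n) be commuting families of self-adjoint elements. If (a₁,…,a_n) lies in the coordinate-wise strong-operator-topology closure of the joint unitary orbit {(u* b₁ u, …, u* b_n u) : u ∈ U(M)}, then it lies in the coordinate-wise norm closure of that orbit. -/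
/-!
The trace is dominated by a single vector functional on some nonzero projection; since a factor with
a faithful trace is algebraically simple, it follows that finitely many vectors control the 2-norm.
Strong approximation therefore yields unitaries `u k` with `(u k)* (b i) (u k) → a i` in the 2-norm
for every `i`. The pairs `(x, y)` with `(u k)* y (u k) → x` in the 2-norm form a `*`-algebra on
which `τ x = τ y`, containing the pairs of corresponding spectral projections of `a i` and `b i`.
Projections of equal trace in a factor are Murray–von Neumann equivalent, so cutting successively by
commuting spectral projections produces a unitary of `M` that intertwines any finite number of such
pairs, and finitely many of them approximate all the `a i` and `b i` in norm by step functions.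
-/

open scoped ComplexOrder
open Filter Topology

/-- A partial isometry `v v* v = v`, bundled so that the extension order is available on the
type. -/
@[ext]
structure PartialIsometry (A : Type*) [Mul A] [Star A] where
  val : A
  mul_star_mul : val * star val * val = val

section Murray

variable {A : Type*} [Mul A] [Star A]

/-- Murray–von Neumann equivalence `p ∼ q` of projections. -/
def MurrayVonNeumannEquiv (p q : A) : Prop := ∃ v : A, star v * v = p ∧ v * star v = q

/-- Murray–von Neumann subequivalence `p ≾ q` of projections; `q * v = v` says that the range
projection `v v*` lies below `q`. -/
def MurrayVonNeumannLE (p q : A) : Prop := ∃ v : A, star v * v = p ∧ q * v = v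

end Murray

namespace PartialIsometry

section Semigroup

variable {A : Type*} [Semigroup A] [StarMul A] (v w : PartialIsometry A)

theorem star_mul_mul_star : star v.val * v.val * star v.val = star v.val := by
  simpa [mul_assoc] using congrArg star v.mul_star_mul

theorem isStarProjection_star_mul : IsStarProjection (star v.val * v.val) :=
  ⟨by rw [IsIdempotentElem, ← mul_assoc, v.star_mul_mul_star], .star_mul_self _⟩

theorem isStarProjection_mul_star : IsStarProjection (v.val * star v.val) :=
  ⟨by rw [IsIdempotentElem, ← mul_assoc, v.mul_star_mul], .mul_star_self _⟩

/-- Drazin's star order; for partial isometries `v ≤ w` says that `w` extends `v` from the initial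
space of `v`. -/
instance : PartialOrder (PartialIsometry A) where
  le v w := w.val * star v.val = v.val * star v.val ∧ star v.val * w.val = star v.val * v.val
  le_refl _ := ⟨rfl, rfl⟩
  le_trans v w x := by
    rintro ⟨hwv, hvw⟩ ⟨hxw, hwx⟩
    have hwv' : v.val * star w.val = v.val * star v.val := by simpa using congrArg star hwv
    have hvw' : star w.val * v.val = star v.val * v.val := by simpa using congrArg star hvw
    have initial : star w.val * w.val * star v.val = star v.val := by
      rw [mul_assoc, hwv, ← mul_assoc, hvw', v.star_mul_mul_star]
    have final : star v.val * w.val * star w.val = star v.val := by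
      rw [hvw, mul_assoc, hwv', ← mul_assoc, v.star_mul_mul_star]
    constructor
    · calc x.val * star v.val = x.val * star w.val * w.val * star v.val := by
            rw [mul_assoc, mul_assoc, ← mul_assoc (star w.val), initial]
        _ = v.val * star v.val := by rw [hxw, w.mul_star_mul, hwv]
    · calc star v.val * x.val = star v.val * w.val * (star w.val * x.val) := by
            rw [← mul_assoc, final]
        _ = star v.val * v.val := by rw [hwx, ← mul_assoc, final, hvw]
  le_antisymm v w := by
    rintro ⟨hwv, -⟩ ⟨hvw, hwv'⟩
    have hfinal : v.val * star v.val = w.val * star w.val := by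
      rw [← hwv, ← star_star (w.val * star v.val), star_mul, star_star, hvw, star_mul, star_star]
    ext
    rw [← v.mul_star_mul, hfinal, mul_assoc, hwv', ← mul_assoc, w.mul_star_mul]

variable {v w}

theorem le_def : v ≤ w ↔
    w.val * star v.val = v.val * star v.val ∧ star v.val * w.val = star v.val * v.val :=
  Iff.rfl

theorem star_mul_val_of_le (h : v ≤ w) : star w.val * v.val = star v.val * v.val := by
  simpa using congrArg star h.2

end Semigroup

section Ring

variable {A : Type*} [NonUnitalSemiring A] [StarRing A]

/-- The sum of partial isometries with orthogonal initial spaces and orthogonal final spaces. -/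
def addOfOrthogonal (v w : PartialIsometry A) (hinitial : v.val * star w.val = 0)
    (hfinal : star v.val * w.val = 0) : PartialIsometry A where
  val := v.val + w.val
  mul_star_mul := by
    have hinitial' : w.val * star v.val = 0 := by simpa using congrArg star hinitial
    have hfinal' : star w.val * v.val = 0 := by simpa using congrArg star hfinal
    simp only [star_add, add_mul, mul_add, hinitial, hinitial', mul_assoc, hfinal, hfinal',
      mul_zero, add_zero, zero_add]
    simp only [← mul_assoc, v.mul_star_mul, w.mul_star_mul]

theorem le_addOfOrthogonal (v w : PartialIsometry A) (hinitial : v.val * star w.val = 0)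
    (hfinal : star v.val * w.val = 0) : v ≤ v.addOfOrthogonal w hinitial hfinal := by
  have hinitial' : w.val * star v.val = 0 := by simpa using congrArg star hinitial
  simp [le_def, addOfOrthogonal, add_mul, mul_add, hinitial', hfinal]

end Ring

section CStarRing

variable {A : Type*} [NonUnitalNormedRing A] [StarRing A] [CStarRing A]

theorem mul_eq_self_of_star_mul_self_eq {v p : A} (hp : IsStarProjection p)
    (hv : star v * v = p) : v * p = v := by
  have hpp : p * p = p := hp.isIdempotentElem
  have hps : star p = p := hp.isSelfAdjoint
  refine sub_eq_zero.1 ((CStarRing.star_mul_self_eq_zero_iff _).1 ?_)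
  calc star (v * p - v) * (v * p - v)
      = p * (star v * v) * p - p * (star v * v) - (star v * v * p - star v * v) := by
        simp only [star_sub, star_mul, hps, sub_mul, mul_sub, mul_assoc]; abel
    _ = 0 := by simp only [hv, hpp, sub_self]

/-- An element with `v* v` a projection, as a partial isometry. -/
@[simps]
def ofStarMul (v : A) (hv : IsStarProjection (star v * v)) : PartialIsometry A where
  val := v
  mul_star_mul := by rw [mul_assoc, mul_eq_self_of_star_mul_self_eq hv rfl]

end CStarRing

end PartialIsometry

section StrongOperatorTopology

section VonNeumannAlgebra

variable {H : Type*} [NormedAddCommGroup H] [InnerProductSpace ℂ H] [CompleteSpace H]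

instance starSubalgebra_starOrderedRing {A : Type*} [CStarAlgebra A] [PartialOrder A]
    [StarOrderedRing A] (S : StarSubalgebra ℂ A) [hS : IsClosed (S : Set A)] :
    StarOrderedRing S :=
  .of_le_iff fun x y => by
    constructor
    · intro hxy
      have hnonneg : (0 : A) ≤ y - x := sub_nonneg.2 hxy
      have hmem : cfc Real.sqrt ((y - x : S) : A) ∈ S := cfc_mem _ (y - x).2
      have hsa : star (cfc Real.sqrt ((y - x : S) : A)) = cfc Real.sqrt ((y - x : S) : A) :=
        (cfc_predicate _ _ : IsSelfAdjoint _)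
      refine ⟨⟨_, hmem⟩, Subtype.ext ?_⟩
      have hsqrt : cfc Real.sqrt ((y - x : S) : A) * cfc Real.sqrt ((y - x : S) : A) =
          (y - x : S) := by
        rw [← cfc_mul ..]
        conv_rhs => rw [← cfc_id' ℝ ((y - x : S) : A)]
        exact cfc_congr fun t ht => Real.mul_self_sqrt (spectrum_nonneg_of_nonneg hnonneg ht)
      change (y : A) = x + star (cfc Real.sqrt ((y - x : S) : A)) * cfc Real.sqrt ((y - x : S) : A)
      rw [hsa, hsqrt]
      simp
    · rintro ⟨s, rfl⟩
      exact le_add_of_nonneg_right (star_mul_self_nonneg (s : A))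

variable (M : VonNeumannAlgebra H)

theorem mem_vonNeumannAlgebra_of_commute {x : H →L[ℂ] H}
    (h : ∀ y ∈ M.commutant, y * x = x * y) : x ∈ M := by
  rw [← M.commutant_commutant]
  exact VonNeumannAlgebra.mem_commutant_iff.2 h

theorem apply_comm_of_mem_commutant {M : VonNeumannAlgebra H} (x : M.toStarSubalgebra)
    {y : H →L[ℂ] H} (hy : y ∈ M.commutant) (ξ : H) :
    (x : H →L[ℂ] H) (y ξ) = y ((x : H →L[ℂ] H) ξ) :=
  congr($(VonNeumannAlgebra.mem_commutant_iff.1 hy x x.2) ξ)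

theorem isClosed_vonNeumannAlgebra : IsClosed (M.toStarSubalgebra : Set (H →L[ℂ] H)) := by
  have hM : (M.toStarSubalgebra : Set (H →L[ℂ] H)) =
      ⋂ y ∈ M.commutant, {x : H →L[ℂ] H | y * x = x * y} := by
    ext x
    simp only [Set.mem_iInter, Set.mem_ofPred_eq]
    exact ⟨fun hx y hy => (VonNeumannAlgebra.mem_commutant_iff.1 hy x hx).symm,
      mem_vonNeumannAlgebra_of_commute M⟩
  rw [hM]
  exact isClosed_biInter fun y _ =>
    isClosed_eq (continuous_const.mul continuous_id) (continuous_id.mul continuous_const)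

theorem starProjection_topologicalClosure_mem (K : Submodule ℂ H)
    (hK : ∀ y ∈ M.commutant, K ≤ K.comap (y : H →ₗ[ℂ] H)) :
    K.topologicalClosure.starProjection ∈ M := by
  rw [VonNeumannAlgebra.IsStarProjection.mem_iff isStarProjection_starProjection]
  intro y hy
  rw [Submodule.range_starProjection]
  exact Submodule.topologicalClosure_minimal K
    ((hK y hy).trans (Submodule.comap_mono K.le_topologicalClosure))
    (K.isClosed_topologicalClosure.preimage y.continuous)

end VonNeumannAlgebra

-- Local: a global instance would make the norm of `M.toStarSubalgebra` elaborate to that of a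
-- C*-algebra instead of that of a subspace.
attribute [local instance] isClosed_vonNeumannAlgebra

section StrongTendsto

variable {H : Type*} [NormedAddCommGroup H] [InnerProductSpace ℂ H] [CompleteSpace H]
  {M : VonNeumannAlgebra H} {ι : Type*} {F : Filter ι} {x : ι → M.toStarSubalgebra}
  {w w' : M.toStarSubalgebra}

@[ext]
theorem vonNeumannAlgebra_ext (h : ∀ ξ, (w : H →L[ℂ] H) ξ = (w' : H →L[ℂ] H) ξ) : w = w' :=
  Subtype.ext (ContinuousLinearMap.ext h)

/-- Convergence of a family in a von Neumann algebra in the strong operator topology. -/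
def StrongTendsto (x : ι → M.toStarSubalgebra) (F : Filter ι) (w : M.toStarSubalgebra) : Prop :=
  ∀ ξ, Tendsto (fun i => (x i : H →L[ℂ] H) ξ) F (𝓝 ((w : H →L[ℂ] H) ξ))

namespace StrongTendsto

theorem unique [F.NeBot] (h : StrongTendsto x F w) (h' : StrongTendsto x F w') : w = w' :=
  vonNeumannAlgebra_ext fun ξ => tendsto_nhds_unique (h ξ) (h' ξ)

theorem mul_const (h : StrongTendsto x F w) (z : M.toStarSubalgebra) :
    StrongTendsto (fun i => x i * z) F (w * z) :=
  fun ξ => h ((z : H →L[ℂ] H) ξ)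

theorem const_mul (z : M.toStarSubalgebra) (h : StrongTendsto x F w) :
    StrongTendsto (fun i => z * x i) F (z * w) :=
  fun ξ => ((z : H →L[ℂ] H).continuous.tendsto _).comp (h ξ)

theorem congr {y : ι → M.toStarSubalgebra} (h : StrongTendsto x F w) (hxy : ∀ i, x i = y i) :
    StrongTendsto y F w :=
  funext hxy ▸ h

theorem eq_of_eventually_eq [F.NeBot] (h : StrongTendsto x F w) (hx : ∀ᶠ i in F, x i = w') :
    w = w' :=
  h.unique fun _ => tendsto_const_nhds.congr' (hx.mono fun i hi => by simp only [hi])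

end StrongTendsto

theorem exists_strongTendsto_of_norm_le [F.NeBot] {C : ℝ} (hx : ∀ i, ‖x i‖ ≤ C)
    (hlim : ∀ ξ, ∃ η, Tendsto (fun i => (x i : H →L[ℂ] H) ξ) F (𝓝 η)) :
    ∃ w, StrongTendsto x F w := by
  choose g hg using hlim
  let w := ContinuousLinearMap.ofTendstoOfBoundedRange g (fun i => (x i : H →L[ℂ] H))
    (tendsto_pi_nhds.2 hg) (isBounded_iff_forall_norm_le.2 ⟨C, Set.forall_mem_range.2 hx⟩)
  refine ⟨⟨w, mem_vonNeumannAlgebra_of_commute M fun y hy =>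
    ContinuousLinearMap.ext fun ξ => ?_⟩, hg⟩
  exact tendsto_nhds_unique ((y.continuous.tendsto _).comp (hg ξ))
    ((hg (y ξ)).congr fun i => apply_comm_of_mem_commutant (x i) hy ξ)

theorem exists_tendsto_of_norm_sub_sq_le {E ι : Type*} [NormedAddCommGroup E] [CompleteSpace E]
    [Preorder ι] [IsDirectedOrder ι] [Nonempty ι] {x : ι → E} {φ : ι → ℝ}
    (hφ : BddAbove (Set.range φ)) (h : ∀ ⦃i j⦄, i ≤ j → ‖x j - x i‖ ^ 2 ≤ φ j - φ i) :
    ∃ η, Tendsto x atTop (𝓝 η) := by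
  apply cauchy_map_iff_exists_tendsto.1
  rw [Metric.cauchy_iff]
  refine ⟨inferInstance, fun ε hε => ?_⟩
  obtain ⟨i, hi⟩ := exists_lt_of_lt_ciSup (sub_lt_self (⨆ j, φ j) (by positivity : 0 < (ε / 2) ^ 2))
  have hdist : ∀ j, i ≤ j → dist (x j) (x i) < ε / 2 := by
    intro j hij
    rw [dist_eq_norm]
    apply lt_of_pow_lt_pow_left₀ 2 (by positivity)
    linarith [h hij, le_ciSup hφ j]
  refine ⟨x '' Set.Ici i, image_mem_map (Ici_mem_atTop i), ?_⟩
  rintro _ ⟨j, hj, rfl⟩ _ ⟨k, hk, rfl⟩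
  linarith [dist_triangle_right (x j) (x k) (x i), hdist j hj, hdist k hk]

end StrongTendsto

namespace PartialIsometry

theorem norm_val_le_one {A : Type*} [NonUnitalCStarAlgebra A] (v : PartialIsometry A) :
    ‖v.val‖ ≤ 1 := by
  have h := v.isStarProjection_star_mul.norm_le
  rw [CStarRing.norm_star_mul_self] at h
  nlinarith [norm_nonneg v.val]

variable {H : Type*} [NormedAddCommGroup H] [InnerProductSpace ℂ H] [CompleteSpace H]
  {M : VonNeumannAlgebra H}

theorem norm_apply_sub_apply_sq {v w : PartialIsometry M.toStarSubalgebra} (h : v ≤ w) (ξ : H) :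
    ‖(w.val : H →L[ℂ] H) ξ - (v.val : H →L[ℂ] H) ξ‖ ^ 2 =
      ‖(w.val : H →L[ℂ] H) ξ‖ ^ 2 - ‖(v.val : H →L[ℂ] H) ξ‖ ^ 2 := by
  have hadj : ContinuousLinearMap.adjoint (v.val : H →L[ℂ] H) ((w.val : H →L[ℂ] H) ξ) =
      ContinuousLinearMap.adjoint (v.val : H →L[ℂ] H) ((v.val : H →L[ℂ] H) ξ) :=
    congr(($(h.2) : H →L[ℂ] H) ξ)
  have hinner : inner ℂ ((w.val : H →L[ℂ] H) ξ) ((v.val : H →L[ℂ] H) ξ) =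
      inner ℂ ((v.val : H →L[ℂ] H) ξ) ((v.val : H →L[ℂ] H) ξ) := by
    rw [← ContinuousLinearMap.adjoint_inner_left, hadj, ContinuousLinearMap.adjoint_inner_left]
  rw [@norm_sub_sq ℂ, hinner, inner_self_eq_norm_sq]
  ring

theorem exists_strongTendsto_mem_upperBounds (c : Set (PartialIsometry M.toStarSubalgebra))
    [Nonempty c] [IsDirectedOrder c] :
    ∃ w ∈ upperBounds c, StrongTendsto (fun v : c => v.1.val) atTop w.val := by
  obtain ⟨w, hw⟩ : ∃ w, StrongTendsto (fun v : c => v.1.val) atTop w := by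
    refine exists_strongTendsto_of_norm_le (fun v => v.1.norm_val_le_one) fun ξ => ?_
    refine exists_tendsto_of_norm_sub_sq_le (φ := fun v : c => ‖(v.1.val : H →L[ℂ] H) ξ‖ ^ 2) ?_
      fun v w hvw => (norm_apply_sub_apply_sq hvw ξ).le
    refine ⟨‖ξ‖ ^ 2, Set.forall_mem_range.2 fun v => ?_⟩
    have := (v.1.val : H →L[ℂ] H).le_of_opNorm_le v.1.norm_val_le_one ξ
    rw [one_mul] at this
    gcongr
  have hmul_star : ∀ v ∈ c, w * star v.val = v.val * star v.val := fun v hv =>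
    (hw.mul_const _).eq_of_eventually_eq <|
      (eventually_ge_atTop (⟨v, hv⟩ : c)).mono fun _ h => h.1
  have hstar_mul : ∀ v ∈ c, star v.val * w = star v.val * v.val := fun v hv =>
    (hw.const_mul _).eq_of_eventually_eq <|
      (eventually_ge_atTop (⟨v, hv⟩ : c)).mono fun _ h => h.2
  have hw_pi : w * star w * w = w := by
    refine (hw.const_mul (w * star w)).unique (hw.congr fun v => ?_)
    have : star w * v.1.val = star v.1.val * v.1.val := by
      simpa using congrArg star (hstar_mul v v.2)
    rw [mul_assoc, this, ← mul_assoc, hmul_star v v.2, v.1.mul_star_mul]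
  exact ⟨⟨w, hw_pi⟩, fun v hv => ⟨hmul_star v hv, hstar_mul v hv⟩, hw⟩

theorem exists_maximal_of_strongTendsto (P : Set (PartialIsometry M.toStarSubalgebra))
    (hne : P.Nonempty)
    (hP : ∀ (c : Set (PartialIsometry M.toStarSubalgebra)) (w) [Nonempty c] [IsDirectedOrder c],
      c ⊆ P → w ∈ upperBounds c → StrongTendsto (fun v : c => v.1.val) atTop w.val → w ∈ P) :
    ∃ v, Maximal (· ∈ P) v := by
  obtain ⟨v, hv⟩ := hne
  obtain ⟨m, -, hm⟩ := zorn_le_nonempty₀ P (fun c hcP hc y hy => by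
    have : Nonempty c := ⟨⟨y, hy⟩⟩
    have : IsDirectedOrder c := ⟨directedOn_iff_directed.1 hc.directedOn⟩
    obtain ⟨w, hub, hw⟩ := exists_strongTendsto_mem_upperBounds c
    exact ⟨w, hP c w hcP hub hw, hub⟩) v hv
  exact ⟨m, hm⟩

end PartialIsometry

section Order

variable {A : Type*} [CStarAlgebra A] [PartialOrder A] [StarOrderedRing A] {p x y z : A} {δ : ℝ}

theorem mul_eq_zero_of_nonneg_of_le (hy : 0 ≤ y) (hyx : y ≤ x) (hxz : x * z = 0) : y * z = 0 := by
  obtain ⟨s, rfl⟩ := CStarAlgebra.nonneg_iff_eq_star_mul_self.1 hy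
  have hle : star (s * z) * (s * z) ≤ 0 := by
    simpa [mul_assoc, hxz] using star_left_conjugate_le_conjugate hyx z
  have hsz : s * z = 0 :=
    (CStarRing.star_mul_self_eq_zero_iff _).1 (le_antisymm hle (star_mul_self_nonneg _))
  rw [mul_assoc, hsz, mul_zero]

theorem le_smul_of_mul_eq_self (hp : IsStarProjection p) (hy : IsSelfAdjoint y)
    (hpy : p * y = y) (hyδ : y ≤ algebraMap ℝ A δ) : y ≤ δ • p := by
  have hps : star p = p := hp.isSelfAdjoint
  have hyp : y * p = y := by simpa [hps, hy.star_eq] using congrArg star hpy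
  calc y = star p * y * p := by rw [hps, hpy, hyp]
    _ ≤ star p * algebraMap ℝ A δ * p := star_left_conjugate_le_conjugate hyδ p
    _ = δ • p := by
      rw [hps, Algebra.algebraMap_eq_smul_one, mul_smul_comm, mul_one, smul_mul_assoc,
        hp.isIdempotentElem.eq]

theorem smul_le_of_mul_eq_smul (hp : IsStarProjection p) (hy : 0 ≤ y) (hyp : y * p = δ • p) :
    δ • p ≤ y := by
  have hps : star p = p := hp.isSelfAdjoint
  have hpy : p * y = δ • p := by
    simpa [hps, (IsSelfAdjoint.of_nonneg hy).star_eq] using congrArg star hyp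
  have := star_left_conjugate_nonneg hy (1 - p)
  rwa [star_sub, star_one, hps, sub_mul, one_mul, hpy, mul_sub, mul_one, sub_mul, hyp,
    smul_mul_assoc, hp.isIdempotentElem.eq, sub_self, sub_zero, sub_nonneg] at this

end Order

section SpectralProjection

variable {H : Type*} [NormedAddCommGroup H] [InnerProductSpace ℂ H] [CompleteSpace H]
  {M : VonNeumannAlgebra H} {x y z e : M.toStarSubalgebra} {c δ : ℝ} {f g : ℝ → ℝ}

theorem range_le_comap_of_mem_commutant (y : M.toStarSubalgebra) {T : H →L[ℂ] H}
    (hT : T ∈ M.commutant) :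
    LinearMap.range ((y : H →L[ℂ] H) : H →ₗ[ℂ] H) ≤
      (LinearMap.range ((y : H →L[ℂ] H) : H →ₗ[ℂ] H)).comap (T : H →ₗ[ℂ] H) := by
  rintro _ ⟨ζ, rfl⟩
  exact ⟨T ζ, apply_comm_of_mem_commutant y hT ζ⟩

/-- The projection onto the closure of the range of `y`, as an element of the algebra. -/
noncomputable def rangeProjection (y : M.toStarSubalgebra) : M.toStarSubalgebra :=
  ⟨(LinearMap.range ((y : H →L[ℂ] H) : H →ₗ[ℂ] H)).topologicalClosure.starProjection,
    starProjection_topologicalClosure_mem M _ fun _ => range_le_comap_of_mem_commutant y⟩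

theorem isStarProjection_rangeProjection (y : M.toStarSubalgebra) :
    IsStarProjection (rangeProjection y) :=
  ⟨Subtype.ext isStarProjection_starProjection.1, Subtype.ext isStarProjection_starProjection.2⟩

theorem rangeProjection_apply_mem_closure (y : M.toStarSubalgebra) (ξ : H) :
    (rangeProjection y : H →L[ℂ] H) ξ ∈ closure (Set.range (y : H →L[ℂ] H)) :=
  Submodule.starProjection_apply_mem
    (LinearMap.range ((y : H →L[ℂ] H) : H →ₗ[ℂ] H)).topologicalClosure ξ

theorem rangeProjection_mul_self (y : M.toStarSubalgebra) : rangeProjection y * y = y :=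
  vonNeumannAlgebra_ext fun ζ => Submodule.starProjection_eq_self_iff.2
    (Submodule.le_topologicalClosure _ ⟨ζ, rfl⟩)

theorem mul_rangeProjection_eq_zero (hzy : z * y = 0) : z * rangeProjection y = 0 := by
  ext ξ
  have hclosed : IsClosed {η | (z : H →L[ℂ] H) η = 0} :=
    isClosed_eq (z : H →L[ℂ] H).continuous continuous_const
  refine hclosed.closure_subset_iff.2 ?_ (rangeProjection_apply_mem_closure y ξ)
  rintro _ ⟨ζ, rfl⟩
  exact congr(($hzy : H →L[ℂ] H) ζ)

theorem commute_rangeProjection (hz : IsSelfAdjoint z) (hyz : Commute y z) :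
    Commute (rangeProjection y) z := by
  have hps := (isStarProjection_rangeProjection y).isSelfAdjoint.star_eq
  have hinv : (1 - rangeProjection y) * z * rangeProjection y = 0 := by
    apply mul_rangeProjection_eq_zero
    rw [mul_assoc, ← hyz.eq, ← mul_assoc, sub_mul, rangeProjection_mul_self, one_mul, sub_self,
      zero_mul]
  have hzp : z * rangeProjection y = rangeProjection y * z * rangeProjection y := by
    rwa [sub_mul, sub_mul, one_mul, sub_eq_zero] at hinv
  have hpz : rangeProjection y * z = rangeProjection y * z * rangeProjection y := by
    simpa [hps, hz.star_eq, mul_assoc] using congrArg star hzp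
  exact hpz.trans hzp.symm

/-- The spectral projection of a self-adjoint `x` for the interval `(c, ∞)`. -/
noncomputable def spectralProjectionIoi (x : M.toStarSubalgebra) (c : ℝ) : M.toStarSubalgebra :=
  rangeProjection (cfc (fun t : ℝ => max (t - c) 0) x)

theorem isStarProjection_spectralProjectionIoi (x : M.toStarSubalgebra) (c : ℝ) :
    IsStarProjection (spectralProjectionIoi x c) :=
  isStarProjection_rangeProjection _

theorem commute_spectralProjectionIoi (hz : IsSelfAdjoint z) (hxz : Commute x z) (c : ℝ) :
    Commute (spectralProjectionIoi x c) z :=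
  commute_rangeProjection hz (hxz.cfc_real _)

theorem cfc_mul_spectralProjectionIoi_congr (hf : Continuous f) (hg : Continuous g)
    (hfg : Set.EqOn f g (Set.Ioi c)) :
    cfc f x * spectralProjectionIoi x c = cfc g x * spectralProjectionIoi x c := by
  rw [← sub_eq_zero, ← sub_mul]
  apply mul_rangeProjection_eq_zero
  have hzero : (fun t => (f t - g t) * max (t - c) 0) = fun _ => 0 := by
    funext t
    rcases le_or_gt t c with h | h
    · rw [max_eq_right (by linarith), mul_zero]
    · rw [hfg h, sub_self, zero_mul]
  rw [← cfc_sub .., ← cfc_mul .., hzero, cfc_const_zero]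

theorem cfc_mul_spectralProjectionIoi_eq_smul (hx : IsSelfAdjoint x) (hf : Continuous f)
    (hfδ : ∀ t, c < t → f t = δ) :
    cfc f x * spectralProjectionIoi x c = δ • spectralProjectionIoi x c := by
  rw [cfc_mul_spectralProjectionIoi_congr hf (continuous_const (y := δ)) hfδ, cfc_const δ x hx,
    Algebra.algebraMap_eq_smul_one, smul_one_mul]

theorem spectralProjectionIoi_mul_cfc (hf : Continuous f) :
    spectralProjectionIoi x c * cfc (fun t => max (t - c) 0 * f t) x =
      cfc (fun t => max (t - c) 0 * f t) x := by
  rw [cfc_mul .., ← mul_assoc, spectralProjectionIoi, rangeProjection_mul_self]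

theorem spectralProjectionIoi_mul_eq_self (hx : 0 ≤ x) (hc : 0 ≤ c) (hxe : x * e = x) :
    spectralProjectionIoi x c * e = spectralProjectionIoi x c := by
  have hle : cfc (fun t : ℝ => max (t - c) 0) x ≤ x := by
    conv_rhs => rw [← cfc_id' ℝ x (.of_nonneg hx)]
    exact cfc_mono fun t ht => max_le (by linarith) (spectrum_nonneg_of_nonneg hx ht)
  have hy : cfc (fun t : ℝ => max (t - c) 0) x * (1 - e) = 0 :=
    mul_eq_zero_of_nonneg_of_le (cfc_nonneg fun t _ => le_max_right _ _) hle
      (by rw [mul_sub, mul_one, hxe, sub_self])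
  have hys : star (cfc (fun t : ℝ => max (t - c) 0) x) = cfc (fun t : ℝ => max (t - c) 0) x :=
    (cfc_predicate _ _ : IsSelfAdjoint _)
  have hp : star (1 - e) * spectralProjectionIoi x c = 0 :=
    mul_rangeProjection_eq_zero (by simpa [hys] using congrArg star hy)
  have hp' : spectralProjectionIoi x c * (1 - e) = 0 := by
    simpa [(isStarProjection_spectralProjectionIoi x c).isSelfAdjoint.star_eq] using
      congrArg star hp
  rwa [mul_sub, mul_one, sub_eq_zero, eq_comm] at hp'

theorem le_algebraMap_of_spectralProjectionIoi_eq_zero (hx : IsSelfAdjoint x)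
    (hc : spectralProjectionIoi x c = 0) : x ≤ algebraMap ℝ _ c := by
  have hy : cfc (fun t : ℝ => max (t - c) 0) x = 0 := by
    rw [← rangeProjection_mul_self (cfc _ x)]
    exact (congrArg (· * _) hc).trans (zero_mul _)
  calc x = cfc (fun t : ℝ => t) x := (cfc_id' ℝ x hx).symm
    _ ≤ cfc (fun t : ℝ => max (t - c) 0 + c) x :=
      cfc_mono fun t _ => by linarith [le_max_left (t - c) 0]
    _ = algebraMap ℝ _ c := by rw [cfc_add .., hy, zero_add, cfc_const c x hx]

end SpectralProjection

section SpectralSum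

variable {H : Type*} [NormedAddCommGroup H] [InnerProductSpace ℂ H] [CompleteSpace H]
  {M : VonNeumannAlgebra H} {x e : M.toStarSubalgebra} {c δ : ℝ}

theorem min_max_sub_add (t c : ℝ) {r s : ℝ} (hr : 0 ≤ r) (hs : 0 ≤ s) :
    min (max (t - c) 0) (r + s) = min (max (t - c) 0) r + min (max (t - (c + r)) 0) s := by
  grind

theorem cfc_min_le_smul_spectralProjectionIoi (hx : IsSelfAdjoint x) (c : ℝ) (hδ : 0 < δ) :
    cfc (fun t : ℝ => min (max (t - c) 0) δ) x ≤ δ • spectralProjectionIoi x c := by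
  refine le_smul_of_mul_eq_self (isStarProjection_spectralProjectionIoi x c) (cfc_predicate _ _) ?_
    (cfc_le_algebraMap _ _ _ (fun t _ => min_le_right _ _) (by fun_prop) hx)
  have hpos : ∀ t : ℝ, 0 < max (t - c) δ := fun t => hδ.trans_le (le_max_right _ _)
  have hfactor : (fun t : ℝ => min (max (t - c) 0) δ) =
      fun t => max (t - c) 0 * (δ / max (t - c) δ) := by
    funext t
    rw [← mul_div_assoc, eq_div_iff (hpos t).ne']
    grind
  rw [hfactor]
  exact spectralProjectionIoi_mul_cfc
    (continuous_const.div (by fun_prop) fun t => (hpos t).ne')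

theorem smul_spectralProjectionIoi_le_cfc_min (hx : IsSelfAdjoint x) (c : ℝ) (hδ : 0 < δ) :
    δ • spectralProjectionIoi x (c + δ) ≤ cfc (fun t : ℝ => min (max (t - c) 0) δ) x :=
  smul_le_of_mul_eq_smul (isStarProjection_spectralProjectionIoi x _)
    (cfc_nonneg fun _ _ => le_min (le_max_right _ _) hδ.le)
    (cfc_mul_spectralProjectionIoi_eq_smul hx (by fun_prop) fun t ht => by grind)

/-- The step-function approximation `c + ∑_{k < m} δ · 1_{(c + kδ, ∞)}(x)` of `x`. -/
noncomputable def spectralSum (x : M.toStarSubalgebra) (c δ : ℝ) (m : ℕ) : M.toStarSubalgebra :=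
  algebraMap ℝ _ c + δ • ∑ k ∈ Finset.range m, spectralProjectionIoi x (c + k * δ)

theorem cfc_min_mul_bounds (hx : IsSelfAdjoint x) (c : ℝ) (hδ : 0 < δ) (m : ℕ) :
    cfc (fun t : ℝ => min (max (t - c) 0) (m * δ)) x ≤
        δ • ∑ k ∈ Finset.range m, spectralProjectionIoi x (c + k * δ) ∧
      δ • ∑ k ∈ Finset.range m, spectralProjectionIoi x (c + (k + 1 : ℕ) * δ) ≤
        cfc (fun t : ℝ => min (max (t - c) 0) (m * δ)) x := by
  induction m with
  | zero => simp
  | succ m ih =>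
    have hsplit : cfc (fun t : ℝ => min (max (t - c) 0) ((m + 1 : ℕ) * δ)) x =
        cfc (fun t : ℝ => min (max (t - c) 0) (m * δ)) x +
          cfc (fun t : ℝ => min (max (t - (c + m * δ)) 0) δ) x := by
      rw [← cfc_add ..]
      congr! 2 with t
      rw [← min_max_sub_add t c (by positivity) hδ.le, Nat.cast_succ, add_one_mul]
    rw [hsplit, Finset.sum_range_succ, Finset.sum_range_succ, smul_add, smul_add]
    refine ⟨add_le_add ih.1 (cfc_min_le_smul_spectralProjectionIoi hx _ hδ), add_le_add ih.2 ?_⟩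
    rw [Nat.cast_succ, add_one_mul, ← add_assoc]
    exact smul_spectralProjectionIoi_le_cfc_min hx _ hδ

theorem norm_spectralSum_sub_le (hx : IsSelfAdjoint x) (hδ : 0 < δ) {m : ℕ}
    (hspec : spectrum ℝ x ⊆ Set.Icc c (c + m * δ)) : ‖spectralSum x c δ m - x‖ ≤ δ := by
  have hxc : cfc (fun t : ℝ => min (max (t - c) 0) (m * δ)) x = x - algebraMap ℝ _ c := by
    have heq : Set.EqOn (fun t : ℝ => min (max (t - c) 0) (m * δ)) (fun t => t - c)
        (spectrum ℝ x) := fun t ht => by grind [hspec ht]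
    rw [cfc_congr heq, cfc_sub .., cfc_id' ℝ x hx, cfc_const c x hx]
  obtain ⟨hupper, hlower⟩ := cfc_min_mul_bounds hx c hδ m
  rw [hxc] at hupper hlower
  have hnonneg : 0 ≤ spectralSum x c δ m - x := by
    rw [spectralSum, sub_nonneg, ← sub_le_iff_le_add']
    exact hupper
  rw [CStarAlgebra.norm_le_iff_le_algebraMap _ hδ.le hnonneg, Algebra.algebraMap_eq_smul_one]
  let p : ℕ → M.toStarSubalgebra := fun k => spectralProjectionIoi x (c + k * δ)
  have hp : ∀ k, IsStarProjection (p k) := fun k => isStarProjection_spectralProjectionIoi x _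
  calc spectralSum x c δ m - x
      = δ • ∑ k ∈ Finset.range m, p k - (x - algebraMap ℝ _ c) := by rw [spectralSum]; abel
    _ ≤ δ • ∑ k ∈ Finset.range m, p k - δ • ∑ k ∈ Finset.range m, p (k + 1) :=
      sub_le_sub_left hlower _
    _ = δ • (p 0 - p m) := by
      rw [← smul_sub, ← Finset.sum_sub_distrib, Finset.sum_range_sub']
    _ ≤ δ • 1 := smul_le_smul_of_nonneg_left
      ((sub_le_self _ (hp m).nonneg).trans (hp 0).le_one) hδ.le

theorem abs_le_norm_of_mem_spectrum {A : Type*} [CStarAlgebra A] {x : A} {t : ℝ}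
    (ht : t ∈ spectrum ℝ x) : |t| ≤ ‖x‖ := by
  obtain _ | _ := subsingleton_or_nontrivial A
  · simp [spectrum.of_subsingleton] at ht
  · exact spectrum.norm_le_norm_of_mem ht

end SpectralSum

section PositiveFunctional

variable {H : Type*} [NormedAddCommGroup H] [InnerProductSpace ℂ H] [CompleteSpace H]
  {M : VonNeumannAlgebra H} {x e : M.toStarSubalgebra}

theorem positiveLinearMap_le_of_le_on_projections (φ ψ : M.toStarSubalgebra →ₚ[ℂ] ℂ)
    (hφψ : ∀ p, IsStarProjection p → p * e = p → φ p ≤ ψ p) (hx : 0 ≤ x) (hxe : x * e = x) :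
    φ x ≤ ψ x := by
  have hclosed : IsClosed {y | φ y ≤ ψ y} :=
    isClosed_le (map_continuous φ) (map_continuous ψ)
  refine hclosed.closure_subset (Metric.mem_closure_iff.2 fun ε hε => ?_)
  have hδ : 0 < ε / 2 := half_pos hε
  obtain ⟨m, hm⟩ := exists_nat_ge (‖x‖ / (ε / 2))
  rw [div_le_iff₀ hδ] at hm
  have hspec : spectrum ℝ x ⊆ Set.Icc 0 (0 + m * (ε / 2)) := fun t ht =>
    ⟨spectrum_nonneg_of_nonneg hx ht, by
      linarith [le_abs_self t, abs_le_norm_of_mem_spectrum ht]⟩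
  refine ⟨spectralSum x 0 (ε / 2) m, ?_, ?_⟩
  · rw [spectralSum, map_zero, zero_add]
    have hsum : ∀ χ : M.toStarSubalgebra →ₚ[ℂ] ℂ, χ ((ε / 2) • ∑ k ∈ Finset.range m,
        spectralProjectionIoi x (0 + k * (ε / 2))) = (ε / 2) • ∑ k ∈ Finset.range m,
        χ (spectralProjectionIoi x (0 + k * (ε / 2))) := fun χ => by
      rw [← map_sum]
      exact χ.toLinearMap.map_smul_of_tower (ε / 2) _
    simp only [Set.mem_ofPred_eq, hsum]
    refine smul_le_smul_of_nonneg_left (Finset.sum_le_sum fun k _ => ?_) hδ.le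
    exact hφψ _ (isStarProjection_spectralProjectionIoi x _)
      (spectralProjectionIoi_mul_eq_self hx (by positivity) hxe)
  · rw [dist_comm, dist_eq_norm]
    linarith [norm_spectralSum_sub_le (.of_nonneg hx) hδ hspec]
end PositiveFunctional

section Comparison

variable {H : Type*} [NormedAddCommGroup H] [InnerProductSpace ℂ H] [CompleteSpace H]
  {M : VonNeumannAlgebra H} {x p q : M.toStarSubalgebra} {c : ℝ}

theorem exists_mul_mul_mul_spectralProjectionIoi (hx : IsSelfAdjoint x) (hc : 0 < c) :
    ∃ y, IsSelfAdjoint y ∧ y * x * y * spectralProjectionIoi x c = spectralProjectionIoi x c := by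
  obtain ⟨g, hg, hgc⟩ : ∃ g : ℝ → ℝ, Continuous g ∧ ∀ t, c < t → g t * t * g t = 1 := by
    have hpos : ∀ t : ℝ, 0 < max t c := fun t => hc.trans_le (le_max_right _ _)
    refine ⟨fun t => (√(max t c))⁻¹,
      Continuous.inv₀ (by fun_prop) fun t => (Real.sqrt_pos.2 (hpos t)).ne', fun t ht => ?_⟩
    have ht0 : 0 < t := hc.trans ht
    simp only
    rw [max_eq_left ht.le, mul_right_comm, ← mul_inv, Real.mul_self_sqrt ht0.le,
      inv_mul_cancel₀ ht0.ne']
  refine ⟨cfc g x, cfc_predicate _ _, ?_⟩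
  have hgxg : cfc g x * x * cfc g x = cfc (fun t => g t * t * g t) x := by
    rw [cfc_mul .., cfc_mul .., cfc_id' ℝ x hx]
  rw [hgxg, cfc_mul_spectralProjectionIoi_eq_smul hx (by fun_prop) hgc, one_smul]

theorem exists_partialIsometry_of_ne_zero (hx : x ≠ 0) (hqx : q * x = x) (hxp : x * p = x) :
    ∃ v : PartialIsometry M.toStarSubalgebra,
      v.val ≠ 0 ∧ q * v.val = v.val ∧ v.val * p = v.val := by
  set c := ‖star x * x‖ / 2 with hc
  have hc0 : 0 < c := by
    rw [hc, CStarRing.norm_star_mul_self]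
    have := norm_pos_iff.2 hx
    positivity
  have hsa : IsSelfAdjoint (star x * x) := .star_mul_self x
  set f := spectralProjectionIoi (star x * x) c
  have hfs : star f = f := (isStarProjection_spectralProjectionIoi _ _).isSelfAdjoint
  have hff : f * f = f := (isStarProjection_spectralProjectionIoi _ _).isIdempotentElem
  have hf0 : f ≠ 0 := fun h0 => by
    have := (CStarAlgebra.norm_le_iff_le_algebraMap _ hc0.le (star_mul_self_nonneg x)).2
      (le_algebraMap_of_spectralProjectionIoi_eq_zero hsa h0)
    linarith
  have hfp : f * p = f := spectralProjectionIoi_mul_eq_self (star_mul_self_nonneg x) hc0.le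
    (by rw [mul_assoc, hxp])
  obtain ⟨y, hy, hyf⟩ := exists_mul_mul_mul_spectralProjectionIoi hsa hc0
  have hv : star (x * y * f) * (x * y * f) = f := by
    calc star (x * y * f) * (x * y * f) = f * (y * (star x * x) * y * f) := by
          simp only [star_mul, hy.star_eq, hfs, mul_assoc]
      _ = f := by rw [hyf, hff]
  refine ⟨.ofStarMul (x * y * f) (by rw [hv]; exact isStarProjection_spectralProjectionIoi _ _),
    ?_, ?_, ?_⟩
  · intro h0
    rw [PartialIsometry.ofStarMul_val] at h0
    exact hf0 (by rw [← hv, h0, mul_zero])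
  · rw [PartialIsometry.ofStarMul_val, ← mul_assoc, ← mul_assoc, hqx]
  · rw [PartialIsometry.ofStarMul_val, mul_assoc, hfp]

/-- `M` is a factor: its center consists of the scalars. -/
def IsFactor (M : VonNeumannAlgebra H) : Prop :=
  ∀ z : M.toStarSubalgebra, (∀ x, z * x = x * z) → ∃ c : ℂ, z = c • (1 : M.toStarSubalgebra)

theorem exists_central_projection (p : M.toStarSubalgebra) :
    ∃ z : M.toStarSubalgebra, (∀ x, z * x = x * z) ∧ z * p = p ∧
      ∀ q, (∀ x, q * x * p = 0) → q * z = 0 := by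
  let R : M.toStarSubalgebra → Submodule ℂ H := fun x =>
    LinearMap.range (((x * p : M.toStarSubalgebra) : H →L[ℂ] H) : H →ₗ[ℂ] H)
  have hM : (⨆ x, R x).topologicalClosure.starProjection ∈ M :=
    starProjection_topologicalClosure_mem M _ fun T hT => iSup_le fun x =>
      (range_le_comap_of_mem_commutant _ hT).trans (Submodule.comap_mono (le_iSup R x))
  have hM' : (⨆ x, R x).topologicalClosure.starProjection ∈ M.commutant := by
    refine starProjection_topologicalClosure_mem M.commutant _ fun T hT => iSup_le fun x => ?_
    rw [VonNeumannAlgebra.commutant_commutant] at hT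
    rintro _ ⟨ξ, rfl⟩
    exact le_iSup R (⟨T, hT⟩ * x) ⟨ξ, rfl⟩
  refine ⟨⟨_, hM⟩, fun x => Subtype.ext ?_, vonNeumannAlgebra_ext fun ξ => ?_, fun q hq => ?_⟩
  · exact (VonNeumannAlgebra.mem_commutant_iff.1 hM' x x.2).symm
  · exact Submodule.starProjection_eq_self_iff.2
      (Submodule.le_topologicalClosure _ (le_iSup R 1 ⟨ξ, by simp⟩))
  · have hker : (⨆ x, R x).topologicalClosure ≤ LinearMap.ker ((q : H →L[ℂ] H) : H →ₗ[ℂ] H) := by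
      refine Submodule.topologicalClosure_minimal _ (iSup_le fun x => ?_)
        (q : H →L[ℂ] H).isClosed_ker
      rintro _ ⟨ξ, rfl⟩
      exact congr(($((mul_assoc q x p).symm.trans (hq x)) : H →L[ℂ] H) ξ)
    exact vonNeumannAlgebra_ext fun ξ => hker (Submodule.starProjection_apply_mem _ ξ)

theorem IsFactor.eq_zero_or_eq_zero (hM : IsFactor M) (h : ∀ x, q * x * p = 0) :
    p = 0 ∨ q = 0 := by
  obtain ⟨z, hz, hzp, hqz⟩ := exists_central_projection p
  obtain ⟨c, rfl⟩ := hM z hz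
  rw [smul_one_mul] at hzp
  have hqc : c • q = 0 := by simpa using hqz q h
  rcases smul_eq_zero.1 hqc with rfl | hq
  · exact Or.inl (by rw [← hzp, zero_smul])
  · exact Or.inr hq

/-- The partial isometries with initial projection below `p` and final projection below `q`. -/
def partialIsometriesBetween (p q : M.toStarSubalgebra) :
    Set (PartialIsometry M.toStarSubalgebra) :=
  {v | q * v.val = v.val ∧ v.val * p = v.val}

theorem mul_mul_eq_zero_of_maximal {v : PartialIsometry M.toStarSubalgebra}
    (hp : IsStarProjection p) (hq : IsStarProjection q)
    (hv : Maximal (· ∈ partialIsometriesBetween p q) v) (x : M.toStarSubalgebra) :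
    (q - v.val * star v.val) * x * (p - star v.val * v.val) = 0 := by
  obtain ⟨⟨hqv, hvp⟩, hmax⟩ := hv
  have hpv : p * star v.val = star v.val := by
    simpa [hp.isSelfAdjoint.star_eq] using congrArg star hvp
  have hvq : star v.val * q = star v.val := by
    simpa [hq.isSelfAdjoint.star_eq] using congrArg star hqv
  have hp' : IsStarProjection (p - star v.val * v.val) :=
    v.isStarProjection_star_mul.sub_of_mul_eq_left hp (by rw [mul_assoc, hvp])
  have hq' : IsStarProjection (q - v.val * star v.val) :=
    v.isStarProjection_mul_star.sub_of_mul_eq_left hq (by rw [mul_assoc, hvq])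
  by_contra hne
  obtain ⟨w, hw0, hqw, hwp⟩ := exists_partialIsometry_of_ne_zero
    (q := q - v.val * star v.val) (p := p - star v.val * v.val) hne
    (by rw [← mul_assoc, ← mul_assoc, hq'.isIdempotentElem.eq])
    (by rw [mul_assoc, hp'.isIdempotentElem.eq])
  have hfinal : star v.val * w.val = 0 := by
    rw [← hqw, ← mul_assoc, mul_sub, hvq, ← mul_assoc, v.star_mul_mul_star, sub_self, zero_mul]
  have hinitial : v.val * star w.val = 0 := by
    have hwv : w.val * star v.val = 0 := by
      rw [← hwp, mul_assoc, sub_mul, hpv, v.star_mul_mul_star, sub_self, mul_zero]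
    simpa using congrArg star hwv
  have hqw' : q * w.val = w.val := by
    rw [← hqw, ← mul_assoc, mul_sub, hq.isIdempotentElem.eq, ← mul_assoc, hqv]
  have hwp' : w.val * p = w.val := by
    rw [← hwp, mul_assoc, sub_mul, hp.isIdempotentElem.eq, mul_assoc (star v.val), hvp]
  have hle := v.le_addOfOrthogonal w hinitial hfinal
  have hmem : v.addOfOrthogonal w hinitial hfinal ∈ partialIsometriesBetween p q :=
    ⟨by simp [PartialIsometry.addOfOrthogonal, mul_add, hqv, hqw'],
      by simp [PartialIsometry.addOfOrthogonal, add_mul, hvp, hwp']⟩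
  exact hw0 (left_eq_add.1 (congrArg PartialIsometry.val (hle.antisymm (hmax hmem hle))))

theorem IsFactor.murrayVonNeumannLE_total (hM : IsFactor M) (hp : IsStarProjection p)
    (hq : IsStarProjection q) : MurrayVonNeumannLE p q ∨ MurrayVonNeumannLE q p := by
  obtain ⟨v, hv⟩ := PartialIsometry.exists_maximal_of_strongTendsto
    (partialIsometriesBetween p q) ⟨⟨0, by simp⟩, by simp [partialIsometriesBetween]⟩
    fun c w _ _ hc _ hw =>
      ⟨(hw.const_mul q).unique (hw.congr fun v => (hc v.2).1.symm),
        (hw.mul_const p).unique (hw.congr fun v => (hc v.2).2.symm)⟩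
  obtain ⟨hqv, hvp⟩ := hv.prop
  rcases hM.eq_zero_or_eq_zero (mul_mul_eq_zero_of_maximal hp hq hv) with h | h
  · exact Or.inl ⟨v.val, (sub_eq_zero.1 h).symm, hqv⟩
  · exact Or.inr ⟨star v.val, by rw [star_star, sub_eq_zero.1 h], by
      simpa [hp.isSelfAdjoint.star_eq] using congrArg star hvp⟩

end Comparison

/-- A functional with `τ (x y) = τ (y x)`. -/
def IsTracial {A : Type*} [Mul A] (τ : A → ℂ) : Prop := ∀ x y, τ (x * y) = τ (y * x)

/-- A functional that does not vanish on any `x* x` with `x ≠ 0`. -/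
def IsFaithful {A : Type*} [Mul A] [Star A] [Zero A] (τ : A → ℂ) : Prop :=
  ∀ x, τ (star x * x) = 0 → x = 0

theorem IsFaithful.eq_of_mul_eq_of_map_eq {A F : Type*} [NonUnitalRing A] [StarRing A]
    [FunLike F A ℂ] [AddMonoidHomClass F A ℂ] {τ : F} {p q : A} (hτ : IsFaithful τ)
    (hp : IsStarProjection p) (hq : IsStarProjection q) (hqp : q * p = p) (h : τ p = τ q) :
    p = q := by
  have hqp' : IsStarProjection (q - p) := hp.sub_of_mul_eq_right hq hqp
  refine (sub_eq_zero.1 (hτ _ ?_)).symm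
  rw [hqp'.isSelfAdjoint.star_eq, hqp'.isIdempotentElem.eq, map_sub, h, sub_self]

section TwoNorm

variable {A : Type*} [CStarAlgebra A] [PartialOrder A] [StarOrderedRing A] (τ : A →ₚ[ℂ] ℂ)

theorem norm_toPreGNS_mul_le (x y : A) : ‖τ.toPreGNS (x * y)‖ ≤ ‖x‖ * ‖τ.toPreGNS y‖ :=
  (τ.leftMulMapPreGNS x).le_of_opNorm_le
    (LinearMap.mkContinuous_norm_le _ (norm_nonneg x) _) (τ.toPreGNS y)

theorem continuous_toPreGNS : Continuous τ.toPreGNS :=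
  AddMonoidHomClass.continuous_of_bound τ.toPreGNS ‖τ.toPreGNS 1‖ fun x => by
    simpa [mul_comm] using norm_toPreGNS_mul_le τ x 1

theorem inner_toPreGNS_one (x : A) : inner ℂ (τ.toPreGNS 1) (τ.toPreGNS x) = τ x := by
  simp [PositiveLinearMap.preGNS_inner_def]

theorem norm_toPreGNS_sq (x : A) : ‖τ.toPreGNS x‖ ^ 2 = (τ (star x * x)).re := by
  rw [← PositiveLinearMap.ofPreGNS_toPreGNS τ x, ← PositiveLinearMap.preGNS_norm_sq]
  norm_cast

variable {τ}

theorem IsFaithful.eq_zero_of_norm_toPreGNS_eq_zero (hτ : IsFaithful τ) {x : A}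
    (hx : ‖τ.toPreGNS x‖ = 0) : x = 0 := by
  refine hτ x ((τ.preGNS_norm_sq (τ.toPreGNS x)).symm.trans ?_)
  rw [hx, Complex.ofReal_zero, zero_pow two_ne_zero]

theorem IsTracial.norm_toPreGNS_star (hτ : IsTracial τ) (x : A) :
    ‖τ.toPreGNS (star x)‖ = ‖τ.toPreGNS x‖ := by
  simp only [PositiveLinearMap.preGNS_norm_def, PositiveLinearMap.ofPreGNS_toPreGNS]
  rw [star_star, hτ]

theorem IsTracial.norm_toPreGNS_mul_le_mul_norm (hτ : IsTracial τ) (x y : A) :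
    ‖τ.toPreGNS (x * y)‖ ≤ ‖τ.toPreGNS x‖ * ‖y‖ := by
  rw [← hτ.norm_toPreGNS_star, star_mul, ← hτ.norm_toPreGNS_star x, ← norm_star y, mul_comm]
  exact norm_toPreGNS_mul_le τ _ _

end TwoNorm

section TwoNormGraph

variable {A : Type*} [CStarAlgebra A] [PartialOrder A] [StarOrderedRing A] {τ : A →ₚ[ℂ] ℂ}
  {ι : Type*}

/-- The `*`-algebra of all pairs `(x, y)` with `φ i y → x` along `F` in the 2-norm of the
trace `τ`. -/
def twoNormGraph (hτ : IsTracial τ) (φ : ι → A →⋆ₐ[ℂ] A) (F : Filter ι) :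
    StarSubalgebra ℂ (A × A) where
  carrier := {z | Tendsto (fun i => τ.toPreGNS (φ i z.2)) F (𝓝 (τ.toPreGNS z.1))}
  algebraMap_mem' c := by simp [AlgHomClass.commutes, tendsto_const_nhds]
  add_mem' hz hw := by simpa using hz.add hw
  star_mem' {z} hz := by
    rw [Set.mem_ofPred_eq, tendsto_iff_norm_sub_tendsto_zero] at hz ⊢
    simpa only [Prod.fst_star, Prod.snd_star, map_star, ← map_sub, ← star_sub,
      hτ.norm_toPreGNS_star] using hz
  mul_mem' {z w} hz hw := by
    rw [Set.mem_ofPred_eq, tendsto_iff_norm_sub_tendsto_zero] at hz hw ⊢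
    refine squeeze_zero (fun i => norm_nonneg _) (fun i => ?_)
      (by simpa using (hw.const_mul ‖z.2‖).add (hz.mul_const ‖w.1‖))
    have hsplit : φ i (z.2 * w.2) - z.1 * w.1 =
        φ i z.2 * (φ i w.2 - w.1) + (φ i z.2 - z.1) * w.1 := by
      rw [map_mul, mul_sub, sub_mul, sub_add_sub_cancel]
    simp only [← map_sub, Prod.fst_mul, Prod.snd_mul, hsplit]
    rw [map_add]
    refine (norm_add_le _ _).trans (add_le_add ?_ (hτ.norm_toPreGNS_mul_le_mul_norm _ _))
    exact (norm_toPreGNS_mul_le τ _ _).trans <| by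
      gcongr; exact NonUnitalStarAlgHom.norm_apply_le (φ i) z.2

variable {hτ : IsTracial τ} {φ : ι → A →⋆ₐ[ℂ] A} {F : Filter ι} {z w : A × A}

theorem mem_twoNormGraph :
    z ∈ twoNormGraph hτ φ F ↔
      Tendsto (fun i => τ.toPreGNS (φ i z.2)) F (𝓝 (τ.toPreGNS z.1)) :=
  Iff.rfl

theorem map_eq_of_mem_twoNormGraph [F.NeBot] (hφ : ∀ i x, τ (φ i x) = τ x)
    (hz : z ∈ twoNormGraph hτ φ F) : τ z.1 = τ z.2 := by
  have hinner := (tendsto_const_nhds (x := τ.toPreGNS 1)).inner (𝕜 := ℂ) (mem_twoNormGraph.1 hz)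
  simp only [inner_toPreGNS_one, hφ] at hinner
  exact tendsto_nhds_unique hinner tendsto_const_nhds

theorem fst_eq_of_mem_twoNormGraph [F.NeBot] (hfaith : IsFaithful τ)
    (hz : z ∈ twoNormGraph hτ φ F) (hw : w ∈ twoNormGraph hτ φ F) (h : z.2 = w.2) :
    z.1 = w.1 := by
  have hlim := (mem_twoNormGraph.1 (sub_mem hz hw)).norm
  simp only [Prod.snd_sub, h, sub_self, map_zero, norm_zero, Prod.fst_sub] at hlim
  exact sub_eq_zero.1 (hfaith.eq_zero_of_norm_toPreGNS_eq_zero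
    (tendsto_nhds_unique hlim tendsto_const_nhds))

theorem mem_twoNormGraph_of_tendsto {κ : Type*} {l : Filter κ} [l.NeBot] {y : κ → A × A}
    (hφ : ∀ i x, τ (φ i x) = τ x) (hy : ∀ k, y k ∈ twoNormGraph hτ φ F)
    (hfst : Tendsto (fun k => τ.toPreGNS (y k).1) l (𝓝 (τ.toPreGNS z.1)))
    (hsnd : Tendsto (fun k => τ.toPreGNS (y k).2) l (𝓝 (τ.toPreGNS z.2))) :
    z ∈ twoNormGraph hτ φ F := by
  have hisometry : ∀ i x, ‖τ.toPreGNS (φ i x)‖ = ‖τ.toPreGNS x‖ := fun i x => by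
    simp only [PositiveLinearMap.preGNS_norm_def, PositiveLinearMap.ofPreGNS_toPreGNS,
      ← map_star, ← map_mul, hφ]
  refine (Metric.tendstoUniformly_iff.2 fun ε hε => ?_).tendsto_of_eventually_tendsto
    (Eventually.of_forall hy) hfst
  filter_upwards [Metric.tendsto_nhds.1 hsnd ε hε] with k hk i
  rwa [dist_comm, dist_eq_norm, ← map_sub, ← map_sub, hisometry, map_sub, ← dist_eq_norm]

theorem isClosed_twoNormGraph (hφ : ∀ i x, τ (φ i x) = τ x) :
    IsClosed (twoNormGraph hτ φ F : Set (A × A)) := by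
  refine isClosed_of_closure_subset fun z hz => ?_
  obtain ⟨y, hy, hlim⟩ := mem_closure_iff_seq_limit.1 hz
  exact mem_twoNormGraph_of_tendsto hφ hy
    (((continuous_toPreGNS τ).comp continuous_fst).continuousAt.tendsto.comp hlim)
    (((continuous_toPreGNS τ).comp continuous_snd).continuousAt.tendsto.comp hlim)

theorem cfc_mem_twoNormGraph (hφ : ∀ i x, τ (φ i x) = τ x) {f : ℝ → ℝ} (hf : Continuous f)
    (hz₁ : IsSelfAdjoint z.1) (hz₂ : IsSelfAdjoint z.2) (hz : z ∈ twoNormGraph hτ φ F) :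
    (cfc f z.1, cfc f z.2) ∈ twoNormGraph hτ φ F := by
  have : IsClosed (twoNormGraph hτ φ F : Set (A × A)) := isClosed_twoNormGraph hφ
  let _ : ContinuousFunctionalCalculus ℝ (A × A) IsSelfAdjoint :=
    IsSelfAdjoint.instContinuousFunctionalCalculus
  have hsa : IsSelfAdjoint (z.1, z.2) := Prod.ext hz₁ hz₂
  rw [← cfc_map_prod (S := ℂ) f z.1 z.2]
  exact cfc_mem f hz

end TwoNormGraph

section TraceComparison

variable {H : Type*} [NormedAddCommGroup H] [InnerProductSpace ℂ H] [CompleteSpace H]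
  {M : VonNeumannAlgebra H} {τ : M.toStarSubalgebra →ₚ[ℂ] ℂ} {p q : M.toStarSubalgebra}

theorem IsFactor.murrayVonNeumannEquiv_of_map_eq (hM : IsFactor M) (hτ : IsTracial τ)
    (hfaith : IsFaithful τ) (hp : IsStarProjection p) (hq : IsStarProjection q)
    (h : τ p = τ q) : MurrayVonNeumannEquiv p q := by
  have hequiv : ∀ {p q : M.toStarSubalgebra}, IsStarProjection p → IsStarProjection q →
      τ p = τ q → MurrayVonNeumannLE p q → MurrayVonNeumannEquiv p q := by
    rintro _ q hp hq h ⟨v, rfl, hqv⟩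
    refine ⟨v, rfl, hfaith.eq_of_mul_eq_of_map_eq ?_ hq ?_ ?_⟩
    · exact (PartialIsometry.ofStarMul v hp).isStarProjection_mul_star
    · rw [← mul_assoc, hqv]
    · rw [hτ, h]
  rcases hM.murrayVonNeumannLE_total hp hq with hpq | hqp
  · exact hequiv hp hq h hpq
  · obtain ⟨v, hv⟩ := hequiv hq hp h.symm hqp
    exact ⟨star v, by rw [star_star, hv.2], by rw [star_star, hv.1]⟩

end TraceComparison

section Normality

variable {H : Type*} [NormedAddCommGroup H] [InnerProductSpace ℂ H] [CompleteSpace H]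
  {M : VonNeumannAlgebra H} {τ : M.toStarSubalgebra →ₚ[ℂ] ℂ} {e p : M.toStarSubalgebra}

theorem IsFactor.mem_of_isStarProjection (hM : IsFactor M) (hτ : IsTracial τ)
    (hfaith : IsFaithful τ) (J : TwoSidedIdeal M.toStarSubalgebra) (he : IsStarProjection e)
    (he0 : e ≠ 0) (heJ : e ∈ J) (hp : IsStarProjection p) : p ∈ J := by
  have hτ_nonneg : ∀ {p}, IsStarProjection p → 0 ≤ τ p := fun hp => τ.map_nonneg hp.nonneg
  have hτ_zero : ∀ {p}, IsStarProjection p → τ p = 0 → p = 0 := fun hp h =>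
    hfaith _ (by rwa [hp.isSelfAdjoint.star_eq, hp.isIdempotentElem.eq])
  have hτe : 0 < τ e := (hτ_nonneg he).lt_of_ne fun h => he0 (hτ_zero he h.symm)
  obtain ⟨k, hk⟩ : ∃ k : ℕ, τ p ≤ k * τ e := by
    lift τ e to ℝ using (Complex.nonneg_iff.1 hτe.le).2.symm with r
    lift τ p to ℝ using (Complex.nonneg_iff.1 (hτ_nonneg hp)).2.symm with s
    obtain ⟨k, hk⟩ := Archimedean.arch s (Complex.zero_lt_real.1 hτe)
    exact ⟨k, by rw [nsmul_eq_mul] at hk; exact_mod_cast hk⟩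
  induction k generalizing p with
  | zero =>
    rw [Nat.cast_zero, zero_mul] at hk
    rw [hτ_zero hp (le_antisymm hk (hτ_nonneg hp))]
    exact J.zero_mem
  | succ k ih =>
    rcases hM.murrayVonNeumannLE_total hp he with ⟨v, rfl, hev⟩ | ⟨v, hve, hpv⟩
    · rw [← hev]
      exact J.mul_mem_left _ _ (J.mul_mem_right _ _ heJ)
    · have hf : IsStarProjection (v * star v) :=
        (PartialIsometry.ofStarMul v (hve ▸ he)).isStarProjection_mul_star
      have hpf : p * (v * star v) = v * star v := by rw [← mul_assoc, hpv]
      have hfJ : v * star v ∈ J := by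
        rw [← PartialIsometry.mul_eq_self_of_star_mul_self_eq he hve]
        exact J.mul_mem_right _ _ (J.mul_mem_left _ _ heJ)
      have hsubJ : p - v * star v ∈ J := ih (hf.sub_of_mul_eq_right hp hpf) <| by
        rw [map_sub, hτ v, hve, sub_le_iff_le_add]
        simpa [add_mul] using hk
      simpa using J.add_mem hsubJ hfJ

/-- The positive functional `x ↦ ⟪ξ, x ξ⟫`. -/
noncomputable def vectorFunctional (M : VonNeumannAlgebra H) (ξ : H) :
    M.toStarSubalgebra →ₚ[ℂ] ℂ :=
  .mk₀ ((innerSL ℂ ξ).toLinearMap ∘ₗ (ContinuousLinearMap.apply ℂ H ξ).toLinearMap ∘ₗ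
    M.toStarSubalgebra.subtype.toLinearMap) fun _ hx =>
      ((ContinuousLinearMap.nonneg_iff_isPositive _).1 hx).inner_nonneg_right ξ

theorem vectorFunctional_star_mul_self (ξ : H) (x : M.toStarSubalgebra) :
    vectorFunctional M ξ (star x * x) = (‖(x : H →L[ℂ] H) ξ‖ ^ 2 : ℝ) := by
  rw [Complex.ofReal_pow, ← RCLike.ofReal_eq_complex_ofReal, ← inner_self_eq_norm_sq_to_K (𝕜 := ℂ)]
  exact ContinuousLinearMap.adjoint_inner_right _ _ _

theorem vectorFunctional_of_isStarProjection (ξ : H) (hp : IsStarProjection p) :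
    vectorFunctional M ξ p = (‖(p : H →L[ℂ] H) ξ‖ ^ 2 : ℝ) := by
  rw [← vectorFunctional_star_mul_self, hp.isSelfAdjoint.star_eq, hp.isIdempotentElem.eq]

theorem StrongTendsto.tendsto_vectorFunctional {ι : Type*} {F : Filter ι}
    {x : ι → M.toStarSubalgebra} {w : M.toStarSubalgebra} (h : StrongTendsto x F w) (ξ : H) :
    Tendsto (fun i => vectorFunctional M ξ (x i)) F (𝓝 (vectorFunctional M ξ w)) :=
  tendsto_const_nhds.inner (h ξ)

theorem isStarProjection_of_strongTendsto {c : Set (PartialIsometry M.toStarSubalgebra)}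
    [Nonempty c] [IsDirectedOrder c] {w : PartialIsometry M.toStarSubalgebra}
    (hc : ∀ v ∈ c, IsStarProjection v.val) (hub : w ∈ upperBounds c)
    (hw : StrongTendsto (fun v : c => v.1.val) atTop w.val) : IsStarProjection w.val := by
  have hstar_mul : star w.val * w.val = w.val :=
    (hw.const_mul (star w.val)).unique <| hw.congr fun v => by
      rw [PartialIsometry.star_mul_val_of_le (hub v.2), (hc v v.2).isSelfAdjoint.star_eq,
        (hc v v.2).isIdempotentElem.eq]
  exact hstar_mul ▸ w.isStarProjection_star_mul

/-- The projections, regarded as partial isometries, on which `φ` dominates `ψ`. -/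
def dominatedProjections (φ ψ : M.toStarSubalgebra →ₚ[ℂ] ℂ) :
    Set (PartialIsometry M.toStarSubalgebra) :=
  {f | IsStarProjection f.val ∧ ψ f.val ≤ φ f.val}

theorem exists_maximal_dominatedProjections (τ : M.toStarSubalgebra →ₚ[ℂ] ℂ) (ξ : H) :
    ∃ f, Maximal (· ∈ dominatedProjections τ (vectorFunctional M ξ)) f := by
  refine PartialIsometry.exists_maximal_of_strongTendsto _
    ⟨⟨0, by simp⟩, by simp [dominatedProjections]⟩ fun c w _ _ hc hub hw => ?_
  have hwp := isStarProjection_of_strongTendsto (fun v hv => (hc hv).1) hub hw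
  refine ⟨hwp, le_of_tendsto (hw.tendsto_vectorFunctional ξ) (.of_forall fun v => ?_)⟩
  refine (hc v.2).2.trans (OrderHomClass.mono τ ?_)
  refine (hc v.2).1.le_of_mul_eq_left hwp ?_
  simpa [(hc v.2).1.isSelfAdjoint.star_eq, (hc v.2).1.isIdempotentElem.eq] using (hub v.2).2

theorem eq_zero_of_maximal_dominatedProjections {φ ψ : M.toStarSubalgebra →ₚ[ℂ] ℂ}
    {f : PartialIsometry M.toStarSubalgebra} (hf : Maximal (· ∈ dominatedProjections φ ψ) f)
    (hp : IsStarProjection p) (hpf : p * (1 - f.val) = p) (hψφ : ψ p ≤ φ p) : p = 0 := by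
  obtain ⟨⟨hfp, hle⟩, hmax⟩ := hf
  have hpf0 : p * f.val = 0 := by simpa [mul_sub] using hpf
  have hfp0 : f.val * p = 0 := by
    simpa [hp.isSelfAdjoint.star_eq, hfp.isSelfAdjoint.star_eq] using congrArg star hpf0
  let v := PartialIsometry.ofStarMul p (by
    rwa [hp.isSelfAdjoint.star_eq, hp.isIdempotentElem.eq])
  have hinitial : f.val * star v.val = 0 := by rwa [show star v.val = p from hp.isSelfAdjoint]
  have hfinal : star f.val * v.val = 0 := by rwa [hfp.isSelfAdjoint.star_eq]
  have hsum : f.addOfOrthogonal v hinitial hfinal ∈ dominatedProjections φ ψ := by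
    refine ⟨hfp.add hp hfp0, ?_⟩
    change ψ (f.val + p) ≤ φ (f.val + p)
    rw [map_add, map_add]
    exact add_le_add hle hψφ
  have := congrArg PartialIsometry.val
    ((hmax hsum (f.le_addOfOrthogonal v hinitial hfinal)).antisymm
      (f.le_addOfOrthogonal v hinitial hfinal))
  exact left_eq_add.1 this.symm

theorem exists_isStarProjection_le_vectorFunctional [Nontrivial M.toStarSubalgebra]
    (τ : M.toStarSubalgebra →ₚ[ℂ] ℂ) :
    ∃ e : M.toStarSubalgebra, IsStarProjection e ∧ e ≠ 0 ∧ ∃ ξ : H,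
      ∀ p, IsStarProjection p → p * e = p → τ p ≤ vectorFunctional M ξ p := by
  have : Nontrivial H := by
    obtain ⟨ξ, hξ⟩ : ∃ ξ, ((1 : M.toStarSubalgebra) : H →L[ℂ] H) ξ ≠ 0 := by
      by_contra! h
      exact one_ne_zero (vonNeumannAlgebra_ext h)
    exact ⟨⟨_, _, hξ⟩⟩
  have hreal : ∀ φ : M.toStarSubalgebra →ₚ[ℂ] ℂ, ∀ p, IsStarProjection p → (φ p).im = 0 :=
    fun φ _ hp => (Complex.nonneg_iff.1 (φ.map_nonneg hp.nonneg)).2.symm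
  obtain ⟨ξ, hξ⟩ := NormedSpace.exists_lt_norm ℂ H √(τ 1).re
  have hlt : (τ 1).re < (vectorFunctional M ξ 1).re := by
    rw [vectorFunctional_of_isStarProjection ξ (.one _)]
    exact Real.lt_sq_of_sqrt_lt hξ
  obtain ⟨f, hf⟩ := exists_maximal_dominatedProjections τ ξ
  refine ⟨1 - f.val, hf.prop.1.one_sub, fun h => ?_, ξ, fun p hp hpf => ?_⟩
  · have hle := hf.prop.2
    rw [← sub_eq_zero.1 h] at hle
    exact hlt.not_ge (Complex.le_def.1 hle).1
  · by_contra hnle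
    refine hnle ?_
    have hle : vectorFunctional M ξ p ≤ τ p := by
      simp only [Complex.le_def, hreal _ p hp, and_true, not_le] at hnle ⊢
      exact hnle.le
    simp [eq_zero_of_maximal_dominatedProjections hf hp hpf hle]

theorem exists_norm_toPreGNS_le_norm_apply [Nontrivial M.toStarSubalgebra]
    (τ : M.toStarSubalgebra →ₚ[ℂ] ℂ) :
    ∃ e : M.toStarSubalgebra, IsStarProjection e ∧ e ≠ 0 ∧ ∃ ξ : H,
      ∀ y, y * e = y → ‖τ.toPreGNS y‖ ≤ ‖(y : H →L[ℂ] H) ξ‖ := by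
  obtain ⟨e, he, he0, ξ, hξ⟩ := exists_isStarProjection_le_vectorFunctional τ
  refine ⟨e, he, he0, ξ, fun y hy => le_of_sq_le_sq ?_ (norm_nonneg _)⟩
  have hle := positiveLinearMap_le_of_le_on_projections τ (vectorFunctional M ξ) hξ
    (star_mul_self_nonneg y) (by rw [mul_assoc, hy])
  rw [vectorFunctional_star_mul_self] at hle
  rw [norm_toPreGNS_sq]
  exact (Complex.le_def.1 hle).1

/-- The ideal of all `x` such that `y ↦ τ((y x)* (y x))` is controlled by finitely many vectors,
i.e. such that right multiplication by `x` is continuous from the strong operator topology to the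
2-norm of `τ`. -/
noncomputable def strongIdeal (hτ : IsTracial τ) : TwoSidedIdeal M.toStarSubalgebra :=
  .mk' {x | ∃ (s : ℕ) (η : Fin s → H), ∀ y : M.toStarSubalgebra,
      ‖τ.toPreGNS (y * x)‖ ≤ ∑ j, ‖(y : H →L[ℂ] H) (η j)‖}
    ⟨0, Fin.elim0, by simp⟩
    (by
      rintro x x' ⟨s, η, h⟩ ⟨s', η', h'⟩
      refine ⟨s + s', Fin.append η η', fun y => ?_⟩
      rw [mul_add, map_add, Fin.sum_univ_add]
      simpa using (norm_add_le _ _).trans (add_le_add (h y) (h' y)))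
    (by simp)
    (by
      rintro z x ⟨s, η, h⟩
      exact ⟨s, fun j => (z : H →L[ℂ] H) (η j), fun y => by simpa [mul_assoc] using h (y * z)⟩)
    (by
      rintro x z ⟨s, η, h⟩
      refine ⟨s, fun j => (‖z‖ : ℂ) • η j, fun y => ?_⟩
      rw [← mul_assoc]
      refine (hτ.norm_toPreGNS_mul_le_mul_norm _ _).trans ?_
      simpa [norm_smul, ← Finset.mul_sum, mul_comm] using
        mul_le_mul_of_nonneg_right (h y) (norm_nonneg z))

theorem mem_strongIdeal {hτ : IsTracial τ} {x : M.toStarSubalgebra} :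
    x ∈ strongIdeal hτ ↔ ∃ (s : ℕ) (η : Fin s → H), ∀ y : M.toStarSubalgebra,
      ‖τ.toPreGNS (y * x)‖ ≤ ∑ j, ‖(y : H →L[ℂ] H) (η j)‖ :=
  TwoSidedIdeal.mem_mk' ..

theorem IsFactor.exists_norm_toPreGNS_le_sum (hM : IsFactor M) (hτ : IsTracial τ)
    (hfaith : IsFaithful τ) :
    ∃ (s : ℕ) (η : Fin s → H), ∀ y : M.toStarSubalgebra,
      ‖τ.toPreGNS y‖ ≤ ∑ j, ‖(y : H →L[ℂ] H) (η j)‖ := by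
  obtain _ | _ := subsingleton_or_nontrivial M.toStarSubalgebra
  · exact ⟨0, Fin.elim0, fun y => by simp [Subsingleton.elim y 0]⟩
  obtain ⟨e, he, he0, ξ, hξ⟩ := exists_norm_toPreGNS_le_norm_apply τ
  have heJ : e ∈ strongIdeal hτ := mem_strongIdeal.2
    ⟨1, fun _ => (e : H →L[ℂ] H) ξ, fun y => by
      simpa using hξ (y * e) (by rw [mul_assoc, he.isIdempotentElem.eq])⟩
  simpa [mem_strongIdeal] using
    hM.mem_of_isStarProjection hτ hfaith (strongIdeal hτ) he he0 heJ (.one _)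

theorem StrongTendsto.tendsto_toPreGNS (hM : IsFactor M) (hτ : IsTracial τ)
    (hfaith : IsFaithful τ) {ι : Type*} {F : Filter ι} {x : ι → M.toStarSubalgebra}
    {w : M.toStarSubalgebra} (h : StrongTendsto x F w) :
    Tendsto (fun i => τ.toPreGNS (x i)) F (𝓝 (τ.toPreGNS w)) := by
  obtain ⟨s, η, hη⟩ := hM.exists_norm_toPreGNS_le_sum hτ hfaith
  rw [tendsto_iff_norm_sub_tendsto_zero]
  refine squeeze_zero (fun _ => norm_nonneg _) (fun i => map_sub τ.toPreGNS _ _ ▸ hη _) ?_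
  simpa using tendsto_finsetSum Finset.univ fun j _ =>
    tendsto_iff_norm_sub_tendsto_zero.1 (h (η j))

end Normality

section SpectralLimit

variable {H : Type*} [NormedAddCommGroup H] [InnerProductSpace ℂ H] [CompleteSpace H]
  {M : VonNeumannAlgebra H} {x y : M.toStarSubalgebra} {c : ℝ} {k : ℕ}

theorem strongTendsto_rangeProjection {ι : Type*} {F : Filter ι} {x : ι → M.toStarSubalgebra}
    {C : NNReal} (hC : ∀ i, ‖x i‖ ≤ C) (hxy : ∀ i, x i * rangeProjection y = x i)
    (hlim : Tendsto (fun i => x i * y) F (𝓝 y)) : StrongTendsto x F (rangeProjection y) := by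
  intro ξ
  have hequi : Equicontinuous fun i => ⇑(x i : H →L[ℂ] H) :=
    (LipschitzWith.uniformEquicontinuous _ C fun i =>
      ContinuousLinearMap.lipschitzWith_of_opNorm_le (hC i)).equicontinuous
  have hclosed : IsClosed {η | Tendsto (fun i => (x i : H →L[ℂ] H) η) F (𝓝 η)} :=
    hequi.isClosed_setOfPred_tendsto continuous_id
  have hrange : Set.range (y : H →L[ℂ] H) ⊆
      {η | Tendsto (fun i => (x i : H →L[ℂ] H) η) F (𝓝 η)} := by
    rintro _ ⟨ζ, rfl⟩
    exact (((ContinuousLinearMap.apply ℂ H ζ).continuous.comp continuous_subtype_val).tendsto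
      y).comp hlim
  refine (hclosed.closure_subset_iff.2 hrange (rangeProjection_apply_mem_closure y ξ)).congr
    fun i => congr(($(hxy i) : H →L[ℂ] H) ξ)

/-- The functions `s / (s + 1 / (k + 1))` of `s = max (t - c) 0`, which increase to the indicator
function of `(c, ∞)`. -/
noncomputable def indicatorApprox (c : ℝ) (k : ℕ) (t : ℝ) : ℝ :=
  max (t - c) 0 * (max (t - c) 0 + 1 / ((k : ℝ) + 1))⁻¹

theorem continuous_indicatorApprox : Continuous (indicatorApprox c k) :=
  Continuous.mul (by fun_prop) (Continuous.inv₀ (by fun_prop) fun t => by positivity)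

theorem abs_indicatorApprox_le_one (t : ℝ) : |indicatorApprox c k t| ≤ 1 := by
  rw [abs_of_nonneg (by unfold indicatorApprox; positivity), indicatorApprox, ← div_eq_mul_inv,
    div_le_one (by positivity)]
  exact le_add_of_nonneg_right (by positivity)

theorem abs_indicatorApprox_mul_sub_le (t : ℝ) :
    |indicatorApprox c k t * max (t - c) 0 - max (t - c) 0| ≤ 1 / ((k : ℝ) + 1) := by
  have hδ : 0 < 1 / ((k : ℝ) + 1) := by positivity
  have heq : indicatorApprox c k t * max (t - c) 0 - max (t - c) 0 =
      -(1 / ((k : ℝ) + 1) * indicatorApprox c k t) := by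
    unfold indicatorApprox
    field_simp
    ring
  rw [heq, abs_neg, abs_mul, abs_of_pos hδ]
  exact mul_le_of_le_one_right hδ.le (abs_indicatorApprox_le_one t)

theorem norm_cfc_indicatorApprox_le_one {A : Type*} [CStarAlgebra A] (x : A) :
    ‖cfc (indicatorApprox c k) x‖ ≤ 1 :=
  norm_cfc_le zero_le_one fun t _ => abs_indicatorApprox_le_one t

theorem tendsto_cfc_indicatorApprox_mul {A : Type*} [CStarAlgebra A] (x : A) (c : ℝ) :
    Tendsto (fun k => cfc (indicatorApprox c k) x * cfc (fun t => max (t - c) 0) x) atTop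
      (𝓝 (cfc (fun t => max (t - c) 0) x)) := by
  rw [tendsto_iff_norm_sub_tendsto_zero]
  refine squeeze_zero (fun _ => norm_nonneg _) (fun k => ?_) tendsto_one_div_add_atTop_nhds_zero_nat
  have hcont : Continuous (indicatorApprox c k) := continuous_indicatorApprox
  rw [← cfc_mul .., ← cfc_sub ..]
  exact norm_cfc_le (by positivity) fun t _ => abs_indicatorApprox_mul_sub_le t

theorem cfc_indicatorApprox_mul_spectralProjectionIoi :
    cfc (indicatorApprox c k) x * spectralProjectionIoi x c = cfc (indicatorApprox c k) x := by
  have hsa : IsSelfAdjoint (cfc (indicatorApprox c k) x) := cfc_predicate ..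
  have hproj : spectralProjectionIoi x c * cfc (indicatorApprox c k) x =
      cfc (indicatorApprox c k) x :=
    spectralProjectionIoi_mul_cfc <|
      Continuous.inv₀ (by fun_prop) fun t => by positivity
  simpa [hsa.star_eq, (isStarProjection_spectralProjectionIoi x c).isSelfAdjoint.star_eq] using
    congrArg star hproj

theorem strongTendsto_cfc_indicatorApprox (x : M.toStarSubalgebra) (c : ℝ) :
    StrongTendsto (fun k => cfc (indicatorApprox c k) x) atTop (spectralProjectionIoi x c) :=
  strongTendsto_rangeProjection (C := 1) (fun _ => norm_cfc_indicatorApprox_le_one x)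
    (fun _ => cfc_indicatorApprox_mul_spectralProjectionIoi) (tendsto_cfc_indicatorApprox_mul x c)

variable {τ : M.toStarSubalgebra →ₚ[ℂ] ℂ} {ι : Type*} {hτ : IsTracial τ}
  {φ : ι → M.toStarSubalgebra →⋆ₐ[ℂ] M.toStarSubalgebra} {F : Filter ι}

theorem mem_twoNormGraph_of_tendsto_cfc {A : Type*} [CStarAlgebra A] [PartialOrder A]
    [StarOrderedRing A] {τ : A →ₚ[ℂ] ℂ} {hτ : IsTracial τ} {φ : ι → A →⋆ₐ[ℂ] A}
    {x y p q : A} {f : ℕ → ℝ → ℝ} (hφ : ∀ i x, τ (φ i x) = τ x) (hf : ∀ k, Continuous (f k))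
    (hx : IsSelfAdjoint x) (hy : IsSelfAdjoint y) (hxy : (x, y) ∈ twoNormGraph hτ φ F)
    (hp : Tendsto (fun k => τ.toPreGNS (cfc (f k) x)) atTop (𝓝 (τ.toPreGNS p)))
    (hq : Tendsto (fun k => τ.toPreGNS (cfc (f k) y)) atTop (𝓝 (τ.toPreGNS q))) :
    (p, q) ∈ twoNormGraph hτ φ F :=
  mem_twoNormGraph_of_tendsto hφ (fun k => cfc_mem_twoNormGraph hφ (hf k) hx hy hxy) hp hq

theorem IsFactor.spectralProjectionIoi_mem_twoNormGraph (hM : IsFactor M) (hfaith : IsFaithful τ)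
    (hφ : ∀ i x, τ (φ i x) = τ x) (hx : IsSelfAdjoint x) (hy : IsSelfAdjoint y)
    (hxy : (x, y) ∈ twoNormGraph hτ φ F) (c : ℝ) :
    (spectralProjectionIoi x c, spectralProjectionIoi y c) ∈ twoNormGraph hτ φ F := by
  have hx_lim := (strongTendsto_cfc_indicatorApprox x c).tendsto_toPreGNS hM hτ hfaith
  have hy_lim := (strongTendsto_cfc_indicatorApprox y c).tendsto_toPreGNS hM hτ hfaith
  exact mem_twoNormGraph_of_tendsto_cfc hφ (fun k => continuous_indicatorApprox) hx hy hxy hx_lim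
    hy_lim

end SpectralLimit

theorem isStarProjection_prod_iff {A B : Type*} [Mul A] [Star A] [Mul B] [Star B] {z : A × B} :
    IsStarProjection z ↔ IsStarProjection z.1 ∧ IsStarProjection z.2 :=
  ⟨fun h => ⟨⟨congrArg Prod.fst h.1, congrArg Prod.fst h.2⟩,
    ⟨congrArg Prod.snd h.1, congrArg Prod.snd h.2⟩⟩,
    fun h => ⟨Prod.ext h.1.1 h.2.1, Prod.ext h.1.2 h.2.2⟩⟩

section Intertwiner

theorem star_mul_self_add {R : Type*} [NonUnitalSemiring R] [StarRing R] {v w : R}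
    (h : star v * w = 0) : star (v + w) * (v + w) = star v * v + star w * w := by
  have h' : star w * v = 0 := by simpa using congrArg star h
  simp [add_mul, mul_add, h, h']

variable {A : Type*} [NonUnitalNormedRing A] [StarRing A] [CStarRing A]

theorem mul_eq_self_of_mul_star_self_eq {v q : A} (hq : IsStarProjection q)
    (hv : v * star v = q) : q * v = v := by
  have h : star v * q = star v :=
    PartialIsometry.mul_eq_self_of_star_mul_self_eq hq (by rw [star_star, hv])
  simpa [hq.isSelfAdjoint.star_eq] using congrArg star h

theorem star_mul_eq_zero_of_mul_eq_zero {v w q r : A} (hq : IsStarProjection q)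
    (hr : IsStarProjection r) (hv : v * star v = q) (hw : w * star w = r) (hqr : q * r = 0) :
    star v * w = 0 := by
  rw [← mul_eq_self_of_mul_star_self_eq hq hv, ← mul_eq_self_of_mul_star_self_eq hr hw, star_mul,
    hq.isSelfAdjoint.star_eq, mul_assoc, ← mul_assoc q, hqr, zero_mul, mul_zero]

theorem star_mul_self_add_eq_of_mul_eq_zero {v w p q p' q' : A} (hp : IsStarProjection p)
    (hq : IsStarProjection q) (hp' : IsStarProjection p') (hq' : IsStarProjection q')
    (hpp' : p * p' = 0) (hqq' : q * q' = 0) (hv : star v * v = p) (hv' : v * star v = q)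
    (hw : star w * w = p') (hw' : w * star w = q') :
    star (v + w) * (v + w) = p + p' ∧ (v + w) * star (v + w) = q + q' := by
  constructor
  · rw [star_mul_self_add (star_mul_eq_zero_of_mul_eq_zero hq hq' hv' hw' hqq'), hv, hw]
  · have h := star_mul_self_add (star_mul_eq_zero_of_mul_eq_zero (v := star v) (w := star w) hp hp'
      (by rwa [star_star]) (by rwa [star_star]) hpp')
    simpa only [← star_add, star_star, hv', hw'] using h

theorem intertwines_of_mul_eq_self {e x : A × A} {v : A} (hx : IsStarProjection x)
    (hv : star v * v = x.1) (hv' : v * star v = x.2) (hxe : x * e = x) (hex : e * x = x) :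
    e.2 * v = v * e.1 := by
  have hvx := PartialIsometry.mul_eq_self_of_star_mul_self_eq (isStarProjection_prod_iff.1 hx).1 hv
  have hxv := mul_eq_self_of_mul_star_self_eq (isStarProjection_prod_iff.1 hx).2 hv'
  calc e.2 * v = e.2 * x.2 * v := by rw [mul_assoc, hxv]
    _ = v * (x.1 * e.1) := by
      rw [← Prod.snd_mul, ← Prod.fst_mul, hex, hxe, hxv, hvx]
    _ = v * e.1 := by rw [← mul_assoc, hvx]

theorem intertwines_of_mul_eq_zero {e y : A × A} {w : A} (hy : IsStarProjection y)
    (hw : star w * w = y.1) (hw' : w * star w = y.2) (hye : y * e = 0) (hey : e * y = 0) :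
    e.2 * w = w * e.1 := by
  have hwy := PartialIsometry.mul_eq_self_of_star_mul_self_eq (isStarProjection_prod_iff.1 hy).1 hw
  have hyw := mul_eq_self_of_mul_star_self_eq (isStarProjection_prod_iff.1 hy).2 hw'
  rw [← hyw, ← mul_assoc, ← Prod.snd_mul, hey, hyw, ← hwy, mul_assoc, ← Prod.fst_mul, hye,
    Prod.fst_zero, Prod.snd_zero, zero_mul, mul_zero]

theorem exists_intertwiner_of_murrayVonNeumannEquiv {S κ : Type*} [SetLike S (A × A)]
    [NonUnitalSubringClass S (A × A)] {G : S}
    (hG : ∀ z ∈ G, IsStarProjection z → MurrayVonNeumannEquiv z.1 z.2) {e : κ → A × A}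
    (he : ∀ k, IsStarProjection (e k)) (heG : ∀ k, e k ∈ G) (hcomm : ∀ k l, Commute (e k) (e l))
    (s : Finset κ) {z : A × A} (hz : IsStarProjection z) (hzG : z ∈ G)
    (hze : ∀ k, Commute z (e k)) :
    ∃ v, star v * v = z.1 ∧ v * star v = z.2 ∧ ∀ k ∈ s, (e k).2 * v = v * (e k).1 := by
  classical
  induction s using Finset.induction_on generalizing z with
  | empty => simpa [MurrayVonNeumannEquiv] using hG z hzG hz
  | insert l s _ ih =>
    -- `e l` cuts `z` into two orthogonal pieces, and the intertwiners of the pieces add up.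
    have hzx : z * (z * e l) = z * e l := by rw [← mul_assoc, hz.isIdempotentElem]
    have hx : IsStarProjection (z * e l) := hz.mul (he l) (hze l)
    have hy : IsStarProjection (z - z * e l) := hx.sub_of_mul_eq_right hz hzx
    have hxG : z * e l ∈ G := mul_mem hzG (heG l)
    have hxe : ∀ k, Commute (z * e l) (e k) := fun k => (hze k).mul_left (hcomm l k)
    obtain ⟨v, hv, hv', hvs⟩ := ih hx hxG hxe
    obtain ⟨w, hw, hw', hws⟩ := ih hy (sub_mem hzG hxG) fun k => (hze k).sub_left (hxe k)
    have hxe_self : z * e l * e l = z * e l := by rw [mul_assoc, (he l).isIdempotentElem]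
    have hye_zero : (z - z * e l) * e l = 0 := by rw [sub_mul, hxe_self, sub_self]
    have hyx : (z - z * e l) * (z * e l) = 0 := by
      rw [(hze l).eq, ← mul_assoc, ← (hze l).eq, hye_zero, zero_mul]
    obtain ⟨hx₁, hx₂⟩ := isStarProjection_prod_iff.1 hx
    obtain ⟨hy₁, hy₂⟩ := isStarProjection_prod_iff.1 hy
    have hyp := star_mul_self_add_eq_of_mul_eq_zero hy₁ hy₂ hx₁ hx₂
      (congrArg Prod.fst hyx) (congrArg Prod.snd hyx) hw hw' hv hv'
    rw [← Prod.fst_add, ← Prod.snd_add, sub_add_cancel] at hyp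
    refine ⟨w + v, hyp.1, hyp.2, fun k hk => ?_⟩
    suffices h : (e k).2 * w = w * (e k).1 ∧ (e k).2 * v = v * (e k).1 by
      rw [mul_add, add_mul, h.1, h.2]
    obtain rfl | hk := Finset.mem_insert.1 hk
    · exact ⟨intertwines_of_mul_eq_zero hy hw hw' hye_zero
          (((hze k).sub_left (hxe k)).eq.symm.trans hye_zero),
        intertwines_of_mul_eq_self hx hv hv' hxe_self ((hxe k).eq.symm.trans hxe_self)⟩
    · exact ⟨hws k hk, hvs k hk⟩

end Intertwiner

section ApproximateEquivalence

variable {H : Type*} [NormedAddCommGroup H] [InnerProductSpace ℂ H] [CompleteSpace H]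
  {M : VonNeumannAlgebra H} {τ : M.toStarSubalgebra →ₚ[ℂ] ℂ} {ι κ : Type*}

theorem IsTracial.map_conjStarAlgAut {A : Type*} [Ring A] [StarRing A] [Algebra ℂ A] {τ : A → ℂ}
    (hτ : IsTracial τ) (u : unitary A) (x : A) : τ (Unitary.conjStarAlgAut ℂ A u x) = τ x := by
  rw [Unitary.conjStarAlgAut_apply, hτ, ← mul_assoc, Unitary.star_mul_self_of_mem u.2, one_mul]

theorem IsFactor.exists_mem_twoNormGraph (hM : IsFactor M) (hτ : IsTracial τ)
    (hfaith : IsFaithful τ) {a b : ι → M.toStarSubalgebra}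
    (hsot : ∀ ε : ℝ, 0 < ε → ∀ (s : ℕ) (ξ : Fin s → H),
      ∃ u : M.toStarSubalgebra, u * star u = 1 ∧ star u * u = 1 ∧ ∀ (i : ι) (t : Fin s),
        ‖((star u * b i * u : M.toStarSubalgebra) : H →L[ℂ] H) (ξ t) -
          (a i : H →L[ℂ] H) (ξ t)‖ < ε) :
    ∃ u : ℕ → unitary M.toStarSubalgebra, ∀ i, (a i, b i) ∈ twoNormGraph hτ
      (fun k => (Unitary.conjStarAlgAut ℂ M.toStarSubalgebra (u k)).toStarAlgHom) atTop := by
  obtain ⟨s, η, hη⟩ := hM.exists_norm_toPreGNS_le_sum hτ hfaith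
  choose u hu hu' hclose using fun k : ℕ => hsot (1 / ((k : ℝ) + 1)) (by positivity) s η
  refine ⟨fun k => star ⟨u k, Unitary.mem_iff.2 ⟨hu' k, hu k⟩⟩, fun i => ?_⟩
  rw [mem_twoNormGraph, tendsto_iff_norm_sub_tendsto_zero]
  refine squeeze_zero (fun _ => norm_nonneg _) (fun k => ?_)
    (by simpa only [mul_zero] using tendsto_one_div_add_atTop_nhds_zero_nat.const_mul (s : ℝ))
  rw [← map_sub]
  refine (hη _).trans ?_
  calc _ ≤ ∑ _j : Fin s, 1 / ((k : ℝ) + 1) := Finset.sum_le_sum fun j _ => by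
        simpa using (hclose k i j).le
    _ = s * (1 / ((k : ℝ) + 1)) := by simp

theorem spectralSum_mul_eq_mul_spectralSum {x y v : M.toStarSubalgebra} {c δ : ℝ} {m : ℕ}
    (h : ∀ k < m, spectralProjectionIoi y (c + k * δ) * v =
      v * spectralProjectionIoi x (c + k * δ)) :
    spectralSum y c δ m * v = v * spectralSum x c δ m := by
  have hsum := Finset.sum_congr rfl fun k hk => h k (Finset.mem_range.1 hk)
  rw [spectralSum, spectralSum, add_mul, mul_add, Algebra.commutes, smul_mul_assoc,
    mul_smul_comm, Finset.sum_mul, Finset.mul_sum, hsum]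

theorem norm_star_mul_mul_sub_le {A : Type*} [CStarAlgebra A] {x y x' y' v : A} {δ : ℝ}
    (hv : v ∈ unitary A) (h : y' * v = v * x') (hx : ‖x' - x‖ ≤ δ) (hy : ‖y' - y‖ ≤ δ) :
    ‖star v * y * v - x‖ ≤ δ + δ := by
  have hsplit : star v * y * v - x = (x' - x) - star v * (y' - y) * v := by
    rw [mul_sub, sub_mul, mul_assoc _ y', h, ← mul_assoc, Unitary.star_mul_self_of_mem hv, one_mul]
    abel
  rw [hsplit]
  refine (norm_sub_le _ _).trans (add_le_add hx ?_)
  rwa [CStarRing.norm_mul_mem_unitary _ hv, CStarRing.norm_mem_unitary_mul _ (Unitary.star_mem hv)]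

theorem exists_spectrum_subset_Icc {A : Type*} [CStarAlgebra A] [Finite ι] (a : ι → A) {δ : ℝ}
    (hδ : 0 < δ) : ∃ (c : ℝ) (m : ℕ), ∀ i, spectrum ℝ (a i) ⊆ Set.Icc c (c + m * δ) := by
  obtain ⟨C, hC⟩ := Finite.exists_le fun i => ‖a i‖
  obtain ⟨m, hm⟩ := exists_nat_ge (2 * C / δ)
  rw [div_le_iff₀ hδ] at hm
  refine ⟨-C, m, fun i t ht => ?_⟩
  have := abs_le.1 ((abs_le_norm_of_mem_spectrum ht).trans (hC i))
  constructor <;> linarith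

theorem isSelfAdjoint_of_mem_twoNormGraph {A : Type*} [CStarAlgebra A] [PartialOrder A]
    [StarOrderedRing A] {τ : A →ₚ[ℂ] ℂ} {hτ : IsTracial τ} {φ : κ → A →⋆ₐ[ℂ] A} {F : Filter κ}
    [F.NeBot] {x y : A} (hfaith : IsFaithful τ) (hxy : (x, y) ∈ twoNormGraph hτ φ F)
    (hy : IsSelfAdjoint y) : IsSelfAdjoint x :=
  fst_eq_of_mem_twoNormGraph hfaith (star_mem hxy) hxy hy

theorem commute_of_mem_twoNormGraph {A : Type*} [CStarAlgebra A] [PartialOrder A]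
    [StarOrderedRing A] {τ : A →ₚ[ℂ] ℂ} {hτ : IsTracial τ} {φ : κ → A →⋆ₐ[ℂ] A} {F : Filter κ}
    [F.NeBot] {z w : A × A} (hfaith : IsFaithful τ) (hz : z ∈ twoNormGraph hτ φ F)
    (hw : w ∈ twoNormGraph hτ φ F) (h : Commute z.2 w.2) : Commute z.1 w.1 :=
  fst_eq_of_mem_twoNormGraph hfaith (mul_mem hz hw) (mul_mem hw hz) h

theorem commute_spectralProjectionIoi_spectralProjectionIoi {x y : M.toStarSubalgebra}
    (hy : IsSelfAdjoint y) (hxy : Commute x y) (c d : ℝ) :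
    Commute (spectralProjectionIoi x c) (spectralProjectionIoi y d) :=
  (commute_spectralProjectionIoi (isStarProjection_spectralProjectionIoi x c).isSelfAdjoint
    (commute_spectralProjectionIoi hy hxy c).symm d).symm

theorem IsFactor.exists_unitary_norm_sub_lt_of_mem_twoNormGraph [Finite ι] (hM : IsFactor M)
    {hτ : IsTracial τ} (hfaith : IsFaithful τ)
    {φ : κ → M.toStarSubalgebra →⋆ₐ[ℂ] M.toStarSubalgebra} {F : Filter κ} [F.NeBot]
    (hφ : ∀ k x, τ (φ k x) = τ x) {a b : ι → M.toStarSubalgebra}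
    (hb : ∀ i, IsSelfAdjoint (b i)) (hcomm : ∀ i j, Commute (b i) (b j))
    (hab : ∀ i, (a i, b i) ∈ twoNormGraph hτ φ F) {ε : ℝ} (hε : 0 < ε) :
    ∃ v ∈ unitary M.toStarSubalgebra, ∀ i, ‖star v * b i * v - a i‖ < ε := by
  have ha : ∀ i, IsSelfAdjoint (a i) := fun i =>
    isSelfAdjoint_of_mem_twoNormGraph hfaith (hab i) (hb i)
  have hacomm : ∀ i j, Commute (a i) (a j) := fun i j =>
    commute_of_mem_twoNormGraph hfaith (hab i) (hab j) (hcomm i j)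
  have hδ : 0 < ε / 3 := by positivity
  obtain ⟨c, m, hspec⟩ := exists_spectrum_subset_Icc (Sum.elim a b) hδ
  let e : ι × ℕ → M.toStarSubalgebra × M.toStarSubalgebra := fun l =>
    (spectralProjectionIoi (a l.1) (c + l.2 * (ε / 3)),
      spectralProjectionIoi (b l.1) (c + l.2 * (ε / 3)))
  have he : ∀ l, IsStarProjection (e l) := fun l => isStarProjection_prod_iff.2
    ⟨isStarProjection_spectralProjectionIoi .., isStarProjection_spectralProjectionIoi ..⟩
  have hecomm : ∀ l l', Commute (e l) (e l') := fun l l' => Commute.prod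
    (commute_spectralProjectionIoi_spectralProjectionIoi (ha _) (hacomm l.1 l'.1) _ _)
    (commute_spectralProjectionIoi_spectralProjectionIoi (hb _) (hcomm l.1 l'.1) _ _)
  have hemem : ∀ l, e l ∈ twoNormGraph hτ φ F := fun l =>
    hM.spectralProjectionIoi_mem_twoNormGraph hfaith hφ (ha _) (hb _) (hab l.1) _
  have hequiv : ∀ z ∈ twoNormGraph hτ φ F, IsStarProjection z → MurrayVonNeumannEquiv z.1 z.2 :=
    fun z hz hzp => hM.murrayVonNeumannEquiv_of_map_eq hτ hfaith (isStarProjection_prod_iff.1 hzp).1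
      (isStarProjection_prod_iff.1 hzp).2 (map_eq_of_mem_twoNormGraph hφ hz)
  cases nonempty_fintype ι
  obtain ⟨v, hv, hv', hev⟩ := exists_intertwiner_of_murrayVonNeumannEquiv hequiv he hemem hecomm
    (Finset.univ ×ˢ Finset.range m) (.one _) (one_mem _) fun l => Commute.one_left _
  refine ⟨v, Unitary.mem_iff.2 ⟨hv, hv'⟩, fun i => ?_⟩
  have hsum : spectralSum (b i) c (ε / 3) m * v = v * spectralSum (a i) c (ε / 3) m :=
    spectralSum_mul_eq_mul_spectralSum fun k hk => hev (i, k) (by simpa using hk)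
  refine (norm_star_mul_mul_sub_le (Unitary.mem_iff.2 ⟨hv, hv'⟩) hsum
    (norm_spectralSum_sub_le (ha i) hδ (hspec (.inl i)))
    (norm_spectralSum_sub_le (hb i) hδ (hspec (.inr i)))).trans_lt (by linarith)

end ApproximateEquivalence

/-- A linear functional that is nonnegative on every `x* x`, as a positive linear map. -/
noncomputable def positiveLinearMapOfStarMulSelf {A : Type*} [CStarAlgebra A] [PartialOrder A]
    [StarOrderedRing A] (τ : A →ₗ[ℂ] ℂ) (hτ : ∀ x, 0 ≤ τ (star x * x)) : A →ₚ[ℂ] ℂ :=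
  .mk₀ τ fun x hx => by
    obtain ⟨y, rfl⟩ := CStarAlgebra.nonneg_iff_eq_star_mul_self.1 hx
    exact hτ y

theorem sot_closure_of_joint_unitary_orbit_eq_norm_closure_general
    {H : Type*} [NormedAddCommGroup H] [InnerProductSpace ℂ H] [CompleteSpace H]
    {M : VonNeumannAlgebra H} (hM : IsFactor M) (τ : M.toStarSubalgebra →ₗ[ℂ] ℂ)
    (hτ : IsTracial τ) (hpos : ∀ x, 0 ≤ τ (star x * x)) (hfaith : IsFaithful τ)
    {ι : Type*} [Finite ι] (a b : ι → M.toStarSubalgebra) (hb : ∀ i, IsSelfAdjoint (b i))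
    (hcomm : ∀ i j, Commute (b i) (b j))
    (hsot : ∀ ε : ℝ, 0 < ε → ∀ (s : ℕ) (ξ : Fin s → H),
      ∃ u : M.toStarSubalgebra, u * star u = 1 ∧ star u * u = 1 ∧ ∀ (i : ι) (t : Fin s),
        ‖((star u * b i * u : M.toStarSubalgebra) : H →L[ℂ] H) (ξ t) -
          (a i : H →L[ℂ] H) (ξ t)‖ < ε) {ε : ℝ} (hε : 0 < ε) :
    ∃ u : M.toStarSubalgebra, u * star u = 1 ∧ star u * u = 1 ∧
      ∀ i, ‖star u * b i * u - a i‖ < ε := by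
  let τ' := positiveLinearMapOfStarMulSelf τ hpos
  have hτ' : IsTracial τ' := hτ
  have hfaith' : IsFaithful τ' := hfaith
  obtain ⟨u, hu⟩ := hM.exists_mem_twoNormGraph hτ' hfaith' hsot
  obtain ⟨v, hv, hclose⟩ := hM.exists_unitary_norm_sub_lt_of_mem_twoNormGraph hfaith'
    (fun k x => hτ'.map_conjStarAlgAut (u k) x) hb hcomm hu hε
  exact ⟨v, Unitary.mul_star_self_of_mem hv, Unitary.star_mul_self_of_mem hv, hclose⟩

end StrongOperatorTopology

/-- In a II₁ factor `M ⊆ B(H)`, if a commuting self-adjoint family `(a₁,…,a_n)` lies in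
the coordinate-wise strong-operator-topology closure of the joint unitary orbit of a
commuting self-adjoint family `(b₁,…,b_n)`, then it lies in the coordinate-wise norm
closure of that orbit. -/
theorem sot_closure_of_joint_unitary_orbit_eq_norm_closure
    {H : Type*} [NormedAddCommGroup H] [InnerProductSpace ℂ H] [CompleteSpace H]
    (M : VonNeumannAlgebra H)
    (τ : ↥M.toStarSubalgebra →ₗ[ℂ] ℂ) (hτ1 : τ 1 = 1)
    (htr : ∀ x y : ↥M.toStarSubalgebra, τ (x * y) = τ (y * x))
    (hτpos : ∀ x : ↥M.toStarSubalgebra, 0 ≤ τ (star x * x))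
    (hτfaith : ∀ x : ↥M.toStarSubalgebra, τ (star x * x) = 0 → x = 0)
    (hfactor : ∀ z : ↥M.toStarSubalgebra, (∀ x : ↥M.toStarSubalgebra, z * x = x * z) → ∃ c : ℂ, z = c • (1 : ↥M.toStarSubalgebra))
    (hII1 : ∀ t : ℝ, 0 ≤ t → t ≤ 1 →
      ∃ e : ↥M.toStarSubalgebra, e = star e ∧ e * e = e ∧ τ e = (t : ℂ))
    (n : ℕ) (a b : Fin n → ↥M.toStarSubalgebra)
    (hasa : ∀ i, a i = star (a i)) (hbsa : ∀ i, b i = star (b i))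
    (hacomm : ∀ i j, a i * a j = a j * a i)
    (hbcomm : ∀ i j, b i * b j = b j * b i)
    -- `a` lies in the coordinate-wise SOT closure of the joint unitary orbit of `b`:
    (hsot : ∀ ε : ℝ, 0 < ε → ∀ (s : ℕ) (ξ : Fin s → H),
      ∃ u : ↥M.toStarSubalgebra, u * star u = 1 ∧ star u * u = 1 ∧
        ∀ (i : Fin n) (t : Fin s),
          ‖((star u * b i * u : ↥M.toStarSubalgebra) : H →L[ℂ] H) (ξ t) -
            ((a i : ↥M.toStarSubalgebra) : H →L[ℂ] H) (ξ t)‖ < ε) :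
    ∀ ε : ℝ, 0 < ε →
      ∃ u : ↥M.toStarSubalgebra, u * star u = 1 ∧ star u * u = 1 ∧
        ∀ i, ‖star u * b i * u - a i‖ < ε := fun _ hε =>
  sot_closure_of_joint_unitary_orbit_eq_norm_closure_general hfactor τ htr hτpos hτfaith a b
    (fun i => (hbsa i).symm) hbcomm hsot hε
end
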